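/- arXiv:2410.01963 — 4 statements merged into one kernel-verified Lean document; each statement's English description precedes it below -/
import Mathlib

section
/- Let Λ be a finite-dimensional basic algebra and M := mod Λ. Let X be a τ⁻¹-rigid module and let F be a functorially finite torsion-free class of M with Cogen X ⊆ F ⊆ (τ⁻¹X)^⊥. Then X ⊕ (I_s(F)/add X) is a basic τ⁻¹-rigid module and Cogen(X ⊕ (I_s(F)/add X)) = F. -/
/-!
The torsion-free class `F` is governed by an injective cogenerator of `mod Λ`, here
`DΛ = Hom_K(Λ, K)`. Covariant finiteness of `F` gives a right `F`-approximation `h : P → DΛ`, and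
one takes `P` of minimal length, so that no nonzero summand of `P` is killed by `h`. Every `M ∈ F`
embeds in a power of `DΛ`, and the embedding factors through the same power of `P`; hence `P`
cogenerates `F`. Conversely, given a monomorphism `Pⁿ → Y` with `Y ∈ F`, the map `hⁿ` extends to
`Y`, lifts to `Y → Pⁿ`, and the resulting endomorphism of `Pⁿ` is split mono by minimality
(`splitInj_pow`). So `add P` is exactly the class of split injectives of `F`
(`exists_splitInj_cogen`), and `I_s(F)` is a module of minimal length with the same additive
closure as `P` (`exists_basic_addOf`).

Write `I_s(F) = W ⊕ Z` with `Z ∈ add X` and no indecomposable summand of `W` in `add X`. Then `P`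
lies in `add (X ⊕ W)`, so `Cogen (X ⊕ W) = F`. The module `X` is Ext-injective in `F` because
`F ⊆ (τ⁻¹X)^⊥`, and `W` is split injective in `F`; hence `X ⊕ W` is Ext-injective in `F`
(`ext1Zero_dsum`), which is `τ⁻¹`-rigidity. Finally `X` and `W` are basic and share no
indecomposable summand, so `X ⊕ W` is basic (`isBasic_dsum`). The Krull–Schmidt input for this and
for the powers `Pⁿ` is a single form of Fitting's lemma, `exists_isCompl_of_add_eq_id`: a summand of
`A ⊕ B` splits into a summand of `A` and a summand of `B`.
-/

/- Framework: the category `mod Λ` of finitely generated modules over a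
finite-dimensional algebra `Λ`, modeled concretely via `ModuleCat Λ` together
with the finiteness predicate `Module.Finite`.  Subcategories are sets of
(bundled) modules.  `τ⁻¹`-rigidity and `(τ⁻¹X)^⊥` are encoded via the
Auslander–Smalø characterizations
`Hom(τ⁻¹X, M) = 0 ↔ Ext¹(M', X) = 0 for all M' ∈ Cogen M`. -/

open Function

noncomputable section

namespace Paper

variable (Λ : Type) [Ring Λ]

abbrev Mdl := ModuleCat.{0} Λ

/-- The class of all finitely generated `Λ`-modules, i.e. `mod Λ` itself. -/
def modAll : Set (Mdl Λ) := {M | Module.Finite Λ ↥M}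

/-- Isomorphism of modules. -/
def IsoM (M N : Mdl Λ) : Prop := Nonempty (↥M ≃ₗ[Λ] ↥N)

/-- Direct sum of two modules. -/
def dsum (M N : Mdl Λ) : Mdl Λ := ModuleCat.of Λ (↥M × ↥N)

/-- `M` is a direct summand of `N`. -/
def IsSummand (M N : Mdl Λ) : Prop :=
  ∃ (i : ↥M →ₗ[Λ] ↥N) (p : ↥N →ₗ[Λ] ↥M), p.comp i = LinearMap.id

/-- The additive closure `add X`: direct summands of finite direct sums of copies of `X`. -/
def addOf (X : Mdl Λ) : Set (Mdl Λ) :=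
  {M | ∃ n : ℕ, IsSummand Λ M (ModuleCat.of Λ (Fin n → ↥X))}

/-- `M` is a zero object. -/
def IsZeroM (M : Mdl Λ) : Prop := Subsingleton ↥M

/-- `M` is indecomposable (and nonzero). -/
def Indec (M : Mdl Λ) : Prop :=
  ¬ IsZeroM Λ M ∧ ∀ A B : Mdl Λ, IsoM Λ M (dsum Λ A B) → IsZeroM Λ A ∨ IsZeroM Λ B

/-- `X` is basic: no nonzero module `N` with `N ⊕ N` a direct summand of `X`. -/
def IsBasic (X : Mdl Λ) : Prop :=
  ∀ N : Mdl Λ, ¬ IsZeroM Λ N → ¬ IsSummand Λ (dsum Λ N N) X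

/-- `W` is (up to isomorphism) the module `Z/D` obtained from `Z` by deleting all
direct summands lying in `D`. -/
def IsDeleted (Z : Mdl Λ) (D : Set (Mdl Λ)) (W : Mdl Λ) : Prop :=
  ∃ Z' : Mdl Λ, IsoM Λ Z (dsum Λ W Z') ∧
    (∀ V, Indec Λ V → IsSummand Λ V Z' → V ∈ D) ∧
    (∀ V, Indec Λ V → IsSummand Λ V W → V ∉ D)

/-- `Cogen 𝒞` for a class of modules `𝒞`. -/
def CogenS (C : Set (Mdl Λ)) : Set (Mdl Λ) :=
  {M | Module.Finite Λ ↥M ∧ ∃ Y ∈ C, ∃ f : ↥M →ₗ[Λ] ↥Y, Injective f}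

/-- `Cogen X` for a module `X`. -/
def Cogen (X : Mdl Λ) : Set (Mdl Λ) := CogenS Λ (addOf Λ X)

/-- `𝒞^⊥ = {M | Hom(𝒞, M) = 0}`. -/
def perpR (C : Set (Mdl Λ)) : Set (Mdl Λ) :=
  {M | Module.Finite Λ ↥M ∧ ∀ X ∈ C, ∀ f : ↥X →ₗ[Λ] ↥M, f = 0}

/-- `⊥𝒞 = {M | Hom(M, 𝒞) = 0}`. -/
def perpL (C : Set (Mdl Λ)) : Set (Mdl Λ) :=
  {M | Module.Finite Λ ↥M ∧ ∀ X ∈ C, ∀ f : ↥M →ₗ[Λ] ↥X, f = 0}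

/-- `0 → A → E → B → 0` is a short exact sequence. -/
def IsSESeq {A E B : Mdl Λ} (f : ↥A →ₗ[Λ] ↥E) (g : ↥E →ₗ[Λ] ↥B) : Prop :=
  Injective f ∧ Surjective g ∧ LinearMap.range f = LinearMap.ker g

/-- `Ext¹(A, B) = 0`: every short exact sequence `0 → B → E → A → 0` splits. -/
def Ext1Zero (A B : Mdl Λ) : Prop :=
  ∀ (E : Mdl Λ) (f : ↥B →ₗ[Λ] ↥E) (g : ↥E →ₗ[Λ] ↥A),
    IsSESeq Λ f g → ∃ s : ↥A →ₗ[Λ] ↥E, g.comp s = LinearMap.id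

/-- `X` is `τ⁻¹`-rigid, i.e. `Hom(τ⁻¹X, X) = 0`; encoded via the Auslander–Smalø
characterization: `Ext¹(Y, X) = 0` for every `Y ∈ Cogen X`. -/
def TauInvRigid (X : Mdl Λ) : Prop :=
  Module.Finite Λ ↥X ∧ ∀ Y ∈ Cogen Λ X, Ext1Zero Λ Y X

/-- The torsion-free class `(τ⁻¹X)^⊥`; encoded via Auslander–Smalø:
`Hom(τ⁻¹X, M) = 0` iff `Ext¹(N, X) = 0` for all `N ∈ Cogen M`. -/
def perpTauInv (X : Mdl Λ) : Set (Mdl Λ) :=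
  {M | Module.Finite Λ ↥M ∧ ∀ N ∈ Cogen Λ M, Ext1Zero Λ N X}

/-- The zero subcategory `0`. -/
def zeroSubcat : Set (Mdl Λ) := {M | IsZeroM Λ M}

/-- `C` is a torsion-free class of the abelian (wide, extension-closed)
subcategory `W`: contained in `W`, contains `0`, closed under extensions (taken
in `W`) and under submodules lying in `W`. -/
def IsTorfIn (W C : Set (Mdl Λ)) : Prop :=
  C ⊆ W ∧ (∃ Z ∈ C, IsZeroM Λ Z) ∧
  (∀ (A E B : Mdl Λ) (f : ↥A →ₗ[Λ] ↥E) (g : ↥E →ₗ[Λ] ↥B),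
      IsSESeq Λ f g → A ∈ C → B ∈ C → E ∈ W → E ∈ C) ∧
  (∀ M N : Mdl Λ, M ∈ W → N ∈ C → (∃ f : ↥M →ₗ[Λ] ↥N, Injective f) → M ∈ C)

/-- `C` is a torsion-free class of `mod Λ`. -/
def IsTorf (C : Set (Mdl Λ)) : Prop := IsTorfIn Λ (modAll Λ) C

/-- `C` is a torsion class of the abelian (wide) subcategory `W`. -/
def IsTorsIn (W C : Set (Mdl Λ)) : Prop :=
  C ⊆ W ∧ (∃ Z ∈ C, IsZeroM Λ Z) ∧
  (∀ (A E B : Mdl Λ) (f : ↥A →ₗ[Λ] ↥E) (g : ↥E →ₗ[Λ] ↥B),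
      IsSESeq Λ f g → A ∈ C → B ∈ C → E ∈ W → E ∈ C) ∧
  (∀ M N : Mdl Λ, M ∈ C → N ∈ W → (∃ g : ↥M →ₗ[Λ] ↥N, Surjective g) → N ∈ C)

/-- Contravariant finiteness of `C` in `B`: every object of `B` admits a left
`C`-approximation. -/
def ContraFinIn (C B : Set (Mdl Λ)) : Prop :=
  ∀ X ∈ B, ∃ X' ∈ C, ∃ h : ↥X →ₗ[Λ] ↥X',
    ∀ C' ∈ C, ∀ f : ↥X →ₗ[Λ] ↥C', ∃ g : ↥X' →ₗ[Λ] ↥C', g.comp h = f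

/-- Covariant finiteness of `C` in `B`: every object of `B` admits a right
`C`-approximation. -/
def CovFinIn (C B : Set (Mdl Λ)) : Prop :=
  ∀ X ∈ B, ∃ X' ∈ C, ∃ h : ↥X' →ₗ[Λ] ↥X,
    ∀ C' ∈ C, ∀ f : ↥C' →ₗ[Λ] ↥X, ∃ g : ↥C' →ₗ[Λ] ↥X', h.comp g = f

def FunctFinIn (C B : Set (Mdl Λ)) : Prop := ContraFinIn Λ C B ∧ CovFinIn Λ C B

def ContraFin (C : Set (Mdl Λ)) : Prop := ContraFinIn Λ C (modAll Λ)
def CovFin (C : Set (Mdl Λ)) : Prop := CovFinIn Λ C (modAll Λ)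
def FunctFin (C : Set (Mdl Λ)) : Prop := ContraFin Λ C ∧ CovFin Λ C

/-- `F'` covers `F` in the lattice of torsion-free classes of `W`. -/
def CoversIn (W F' F : Set (Mdl Λ)) : Prop :=
  IsTorfIn Λ W F ∧ IsTorfIn Λ W F' ∧ F ⊂ F' ∧
    ∀ G, IsTorfIn Λ W G → F ⊂ G → G ⊆ F' → G = F'

/-- `pop^G(F)` computed in `torf W`: the join of `F` together with all covers of
`F` contained in `G`, realized as the intersection of all torsion-free classes
of `W` containing them. -/
def popIn (W G F : Set (Mdl Λ)) : Set (Mdl Λ) :=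
  ⋂₀ {H | IsTorfIn Λ W H ∧ F ⊆ H ∧ ∀ F', CoversIn Λ W F' F → F' ⊆ G → F' ⊆ H}

/-- `[Jlo, Jhi]` is a maximal join interval in the interval `[Ilo, Ihi]` of the
lattice of torsion-free classes of `W`. -/
def IsMaxJoinIn (W Jlo Jhi Ilo Ihi : Set (Mdl Λ)) : Prop :=
  IsTorfIn Λ W Jlo ∧ IsTorfIn Λ W Jhi ∧ Ilo ⊆ Jlo ∧ Jlo ⊆ Jhi ∧ Jhi ⊆ Ihi ∧
    Jhi = popIn Λ W Ihi Jlo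

/-- The direct sum `⊕_{a ≤ j ≤ b} X j`. -/
def seqSum (X : ℕ → Mdl Λ) (a b : ℕ) : Mdl Λ :=
  ModuleCat.of Λ ((j : Finset.Icc a b) → ↥(X j.1))

/-- `(X 1, …, X m)` is a cogen-preordered (basic) `τ⁻¹`-rigid module of length `m`. -/
def CogenPreordered (m : ℕ) (X : ℕ → Mdl Λ) : Prop :=
  IsBasic Λ (seqSum Λ X 1 m) ∧ TauInvRigid Λ (seqSum Λ X 1 m) ∧
  ∀ k, 1 ≤ k → k ≤ m → ∀ Y, Indec Λ Y → IsSummand Λ Y (X k) →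
    ∀ W, IsDeleted Λ (seqSum Λ X k m) (addOf Λ Y) W → Y ∉ Cogen Λ W

/-- `X` is cogen-minimal. -/
def CogenMinimal (X : Mdl Λ) : Prop :=
  ∀ Y, Indec Λ Y → IsSummand Λ Y X →
    ∀ W, IsDeleted Λ X (addOf Λ Y) W → Y ∉ Cogen Λ W

/-- `X` is a split injective object of `C`. -/
def SplitInjIn (C : Set (Mdl Λ)) (X : Mdl Λ) : Prop :=
  X ∈ C ∧ ∀ Y ∈ C, ∀ f : ↥X →ₗ[Λ] ↥Y, Injective f →
    ∃ r : ↥Y →ₗ[Λ] ↥X, r.comp f = LinearMap.id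

/-- `I` is the basic module `I_s(C)` whose additive closure consists of the
split injective objects of `C`. -/
def IsMinSplitInj (C : Set (Mdl Λ)) (I : Mdl Λ) : Prop :=
  IsBasic Λ I ∧ addOf Λ I = {X | SplitInjIn Λ C X}

/-- `C` is an ICE-closed subcategory of `mod Λ`. -/
def IsICE (C : Set (Mdl Λ)) : Prop :=
  (∀ M ∈ C, Module.Finite Λ ↥M) ∧
  (∀ M N, IsoM Λ M N → M ∈ C → N ∈ C) ∧
  (∃ Z ∈ C, IsZeroM Λ Z) ∧
  (∀ (A E B : Mdl Λ) (f : ↥A →ₗ[Λ] ↥E) (g : ↥E →ₗ[Λ] ↥B),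
      IsSESeq Λ f g → A ∈ C → B ∈ C → Module.Finite Λ ↥E → E ∈ C) ∧
  (∀ M N : Mdl Λ, M ∈ C → N ∈ C → ∀ f : ↥M →ₗ[Λ] ↥N,
      ModuleCat.of Λ ↥(LinearMap.range f) ∈ C ∧
      ModuleCat.of Λ (↥N ⧸ LinearMap.range f) ∈ C)

/-- `W_L(C)`. -/
def WL (C : Set (Mdl Λ)) : Set (Mdl Λ) :=
  {X | X ∈ C ∧ ∀ Y ∈ C, ∀ f : ↥Y →ₗ[Λ] ↥X, ModuleCat.of Λ ↥(LinearMap.ker f) ∈ C}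

/-- An ICE-sequence. -/
def IsICESeq (C : ℤ → Set (Mdl Λ)) : Prop :=
  ∀ k : ℤ, IsICE Λ (C k) ∧ IsTorsIn Λ (WL Λ (C k)) (C (k + 1))

/-- The ICE-sequence `C` has length `m`. -/
def ICESeqLen (C : ℤ → Set (Mdl Λ)) (m : ℕ) : Prop :=
  C 1 = zeroSubcat Λ ∧ C (-(m : ℤ)) = modAll Λ

/-- The heart `G ∩ ⊥F` of an interval `[F, G]` of torsion-free classes. -/
def heart (F G : Set (Mdl Λ)) : Set (Mdl Λ) := G ∩ perpL Λ F

/-- The `τ⁻¹`-perpendicular category `J^d(X) = (τ⁻¹X)^⊥ ∩ ⊥X`. -/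
def Jd (X : Mdl Λ) : Set (Mdl Λ) := perpTauInv Λ X ∩ perpL Λ (addOf Λ X)

/-- `B * C`: objects which are extensions of an object of `C` by an object of `B`. -/
def starProd (B C : Set (Mdl Λ)) : Set (Mdl Λ) :=
  {E | ∃ Mb Mc : Mdl Λ, Mb ∈ B ∧ Mc ∈ C ∧
    ∃ (f : ↥Mb →ₗ[Λ] ↥E) (g : ↥E →ₗ[Λ] ↥Mc), IsSESeq Λ f g}

/-- The torsion submodule `t_X M`: the largest submodule of `M` lying in `⊥X`. -/
def tSub (X M : Mdl Λ) : Submodule Λ ↥M :=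
  sSup {N : Submodule Λ ↥M | ∀ f : ↥N →ₗ[Λ] ↥X, f = 0}

/-- The torsion functor value `t_X M`. -/
def tMod (X M : Mdl Λ) : Mdl Λ := ModuleCat.of Λ ↥(tSub Λ X M)

/-- `X` is a `τ⁻¹`-rigid object of the wide subcategory `W` (with respect to the
inverse AR translate of `W`); encoded via Auslander–Smalø in `W`, using
`Cogen_W X = Cogen X ∩ W` and `Ext¹_W = Ext¹`. -/
def TauInvRigidIn (W : Set (Mdl Λ)) (X : Mdl Λ) : Prop :=
  X ∈ W ∧ ∀ Y ∈ Cogen Λ X ∩ W, Ext1Zero Λ Y X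

/-- `X` is cogen-minimal as an object of the wide subcategory `W`. -/
def CogenMinimalIn (W : Set (Mdl Λ)) (X : Mdl Λ) : Prop :=
  ∀ Y, Indec Λ Y → IsSummand Λ Y X →
    ∀ Wd, IsDeleted Λ X (addOf Λ Y) Wd → Y ∉ Cogen Λ Wd ∩ W

end Paper

namespace Paper

section Aux

/-! ### The dual of the regular module -/

/-- The dual `DΛ = Hom_K(Λ, K)` of the regular module. It is a type synonym, so that its only
`Λ`-action is the one defined below. -/
def DualReg (K Λ : Type) [Field K] [Ring Λ] [Algebra K Λ] : Type := Λ →ₗ[K] K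

variable (K Λ : Type) [Field K] [Ring Λ] [Algebra K Λ]

instance : AddCommGroup (DualReg K Λ) := inferInstanceAs (AddCommGroup (Λ →ₗ[K] K))

instance : Module K (DualReg K Λ) := inferInstanceAs (Module K (Λ →ₗ[K] K))

/-- The left action on `DΛ` induced by right multiplication: `(a • φ) b = φ (b * a)`. -/
instance : Module Λ (DualReg K Λ) where
  smul a φ := (LinearMap.comp (show Λ →ₗ[K] K from φ) (LinearMap.mulRight K a) : Λ →ₗ[K] K)
  one_smul φ := LinearMap.ext fun b => congrArg (show Λ →ₗ[K] K from φ) (mul_one b)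
  mul_smul a a' φ := LinearMap.ext fun b =>
    congrArg (show Λ →ₗ[K] K from φ) (mul_assoc b a a').symm
  smul_zero _ := rfl
  smul_add _ _ _ := rfl
  add_smul a a' φ := LinearMap.ext fun b =>
    (congrArg (show Λ →ₗ[K] K from φ) (mul_add b a a')).trans (map_add _ _ _)
  zero_smul φ := LinearMap.ext fun b =>
    (congrArg (show Λ →ₗ[K] K from φ) (mul_zero b)).trans (map_zero _)

theorem DualReg.smul_apply (a : Λ) (φ : DualReg K Λ) (b : Λ) :
    (show Λ →ₗ[K] K from a • φ) b = (show Λ →ₗ[K] K from φ) (b * a) := rfl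

instance : IsScalarTower K Λ (DualReg K Λ) where
  smul_assoc k a φ := LinearMap.ext fun b =>
    (congrArg (show Λ →ₗ[K] K from φ) (mul_smul_comm k b a)).trans (map_smul _ _ _)

instance [FiniteDimensional K Λ] : Module.Finite Λ (DualReg K Λ) :=
  have : Module.Finite K (DualReg K Λ) := inferInstanceAs (Module.Finite K (Λ →ₗ[K] K))
  Module.Finite.of_restrictScalars_finite K Λ _

variable {K Λ} in
/-- The coinduction adjunction: a `K`-linear functional `u` on `M` induces the `Λ`-linear map
`m ↦ (b ↦ u (b • m))`. -/
def toDual {M : Type} [AddCommGroup M] [Module K M] [Module Λ M] [IsScalarTower K Λ M]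
    (u : M →ₗ[K] K) : M →ₗ[Λ] DualReg K Λ where
  toFun m := u.comp ((LinearMap.toSpanSingleton Λ M m).restrictScalars K)
  map_add' m m' := LinearMap.ext fun b =>
    (congrArg u (smul_add b m m')).trans (map_add _ _ _)
  map_smul' a m := LinearMap.ext fun b => congrArg u (mul_smul b a m).symm

variable {K Λ} in
theorem toDual_apply {M : Type} [AddCommGroup M] [Module K M] [Module Λ M] [IsScalarTower K Λ M]
    (u : M →ₗ[K] K) (m : M) (b : Λ) :
    (show Λ →ₗ[K] K from toDual (Λ := Λ) u m) b = u (b • m) := rfl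

/-- `DΛ` is an injective `Λ`-module. -/
theorem dualReg_extend {A Y : Type} [AddCommGroup A] [Module Λ A] [AddCommGroup Y] [Module Λ Y]
    (i : A →ₗ[Λ] Y) (hi : Injective i) (e : A →ₗ[Λ] DualReg K Λ) :
    ∃ e' : Y →ₗ[Λ] DualReg K Λ, e'.comp i = e := by
  let _ : Module K A := Module.compHom A (algebraMap K Λ)
  let _ : Module K Y := Module.compHom Y (algebraMap K Λ)
  have : IsScalarTower K Λ A := ⟨fun k a m => by
    rw [Algebra.smul_def, mul_smul]; rfl⟩
  have : IsScalarTower K Λ Y := ⟨fun k a m => by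
    rw [Algebra.smul_def, mul_smul]; rfl⟩
  let ev : DualReg K Λ →ₗ[K] K := LinearMap.applyₗ (1 : Λ)
  let u : A →ₗ[K] K := ev.comp (e.restrictScalars K)
  obtain ⟨v, hv⟩ := (i.restrictScalars K).exists_leftInverse_of_injective
    (LinearMap.ker_eq_bot.2 hi)
  refine ⟨toDual (u.comp v), ?_⟩
  ext m
  refine LinearMap.ext fun b => ?_
  change u (v (b • i m)) = (show Λ →ₗ[K] K from e m) b
  have h1 : v (b • i m) = b • m := by
    rw [← map_smul]
    exact LinearMap.congr_fun hv (b • m)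
  rw [h1]
  change (show Λ →ₗ[K] K from e (b • m)) 1 = _
  rw [map_smul, DualReg.smul_apply, one_mul]

/-- `DΛ` is a cogenerator of `mod Λ`. -/
theorem dualReg_cogen [FiniteDimensional K Λ] (M : Type) [AddCommGroup M] [Module Λ M]
    [Module.Finite Λ M] : ∃ (n : ℕ) (f : M →ₗ[Λ] (Fin n → DualReg K Λ)), Injective f := by
  let _ : Module K M := Module.compHom M (algebraMap K Λ)
  have : IsScalarTower K Λ M := ⟨fun k a m => by
    rw [Algebra.smul_def, mul_smul]; rfl⟩
  have : Module.Finite K M := Module.Finite.trans Λ M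
  let b := Module.finBasis K M
  refine ⟨_, LinearMap.pi fun k => toDual (b.coord k), ?_⟩
  rw [injective_iff_map_eq_zero]
  intro m hm
  refine b.ext_elem fun k => ?_
  have h := LinearMap.congr_fun (f := (show Λ →ₗ[K] K from toDual (b.coord k) m))
    (g := 0) (congrFun hm k) 1
  rw [toDual_apply, one_smul] at h
  simpa using h

end Aux

section Fitting

variable {Λ : Type} [Ring Λ] {M A B : Type} [AddCommGroup M] [Module Λ M]
  [AddCommGroup A] [Module Λ A] [AddCommGroup B] [Module Λ B]

/-! ### Decompositions coming from Fitting's lemma -/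

/-- If `p ∘ i` is an injective endomorphism of an artinian module, then it is invertible, so `i`
is a split monomorphism. -/
theorem exists_retraction [IsArtinian Λ M] (i : M →ₗ[Λ] A) (p : A →ₗ[Λ] M)
    (h : Injective (p.comp i)) : ∃ r : A →ₗ[Λ] M, r.comp i = LinearMap.id := by
  let e := LinearEquiv.ofBijective _ (IsArtinian.bijective_of_injective_endomorphism _ h)
  exact ⟨e.symm.toLinearMap.comp p, LinearMap.ext fun x => e.symm_apply_apply x⟩

/-- If the identity of `M` is a sum of two endomorphisms, one through `A` and one through `B`, then
the Fitting decomposition of `M` for the first one has a summand of `A` as its bijective part and a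
summand of `B` as its nilpotent part. This plays the role of the Krull–Schmidt exchange
property. -/
theorem exists_isCompl_of_add_eq_id [IsArtinian Λ M] [IsNoetherian Λ M]
    (i : M →ₗ[Λ] A) (p : A →ₗ[Λ] M) (i' : M →ₗ[Λ] B) (p' : B →ₗ[Λ] M)
    (h : p.comp i + p'.comp i' = LinearMap.id) :
    ∃ U U' : Submodule Λ M, IsCompl U U' ∧
      (∃ r : A →ₗ[Λ] U, r.comp (i.comp U.subtype) = LinearMap.id) ∧
      (∃ r : B →ₗ[Λ] U', r.comp (i'.comp U'.subtype) = LinearMap.id) := by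
  let φ : Module.End Λ M := p.comp i
  obtain ⟨N, hN, hN1⟩ := (φ.eventually_isCompl_ker_pow_range_pow.and
    (Filter.eventually_ge_atTop 1)).exists
  have hφ : ∀ x, p (i x) = φ x := fun _ => rfl
  have hψ : ∀ x, p' (i' x) = x - φ x := fun x => by
    rw [← hφ, eq_sub_iff_add_eq, add_comm]
    exact LinearMap.congr_fun h x
  have hcomm : ∀ x, (φ ^ N) (φ x) = φ ((φ ^ N) x) := fun x => by
    rw [← Module.End.mul_apply, ← Module.End.mul_apply, ← pow_succ, ← pow_succ']
  refine ⟨_, _, hN.symm, ?_, ?_⟩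
  · refine exists_retraction _ ((Submodule.projectionOnto _ _ hN.symm).comp p) ?_
    rw [injective_iff_map_eq_zero]
    rintro ⟨x, hx⟩ hx0
    have hmem : φ x ∈ LinearMap.range (φ ^ N) := by
      obtain ⟨y, rfl⟩ := hx
      exact ⟨φ y, hcomm y⟩
    have h1 : Submodule.projectionOnto _ _ hN.symm (φ x) = ⟨φ x, hmem⟩ :=
      Submodule.projectionOnto_apply_left hN.symm ⟨φ x, hmem⟩
    have h2 : φ x = 0 := congrArg Subtype.val (h1.symm.trans hx0)
    have h3 : x ∈ LinearMap.ker (φ ^ N) := by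
      obtain ⟨k, rfl⟩ := Nat.exists_eq_add_of_le' hN1
      rw [LinearMap.mem_ker, pow_succ, Module.End.mul_apply, h2, map_zero]
    exact Subtype.ext (Submodule.disjoint_def.1 hN.disjoint x h3 hx)
  · refine exists_retraction _ ((Submodule.projectionOnto _ _ hN).comp p') ?_
    rw [injective_iff_map_eq_zero]
    rintro ⟨x, hx⟩ hx0
    have hmem : x - φ x ∈ LinearMap.ker (φ ^ N) := by
      rw [LinearMap.mem_ker] at hx ⊢
      rw [map_sub, hcomm, hx, map_zero, sub_zero]
    have h1 : Submodule.projectionOnto _ _ hN (x - φ x) = ⟨x - φ x, hmem⟩ :=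
      Submodule.projectionOnto_apply_left hN ⟨x - φ x, hmem⟩
    have h0 : Submodule.projectionOnto _ _ hN (x - φ x) = 0 := by
      rw [← hψ]; exact hx0
    have h2 : φ x = x := (sub_eq_zero.1 (congrArg Subtype.val (h1.symm.trans h0))).symm
    have h3 : ∀ k, (φ ^ k) x = x := fun k => by
      induction k with
      | zero => rfl
      | succ k ih => rw [pow_succ, Module.End.mul_apply, h2, ih]
    exact Subtype.ext ((h3 N).symm.trans hx)

/-- If no nonzero direct summand of `A` is killed by `h : A → B`, then no nonzero direct summand of
`Aⁿ` is killed by `hⁿ`. -/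
theorem subsingleton_of_killed (h : A →ₗ[Λ] B)
    (hA : ∀ (U : Type) [AddCommGroup U] [Module Λ U] (j : U →ₗ[Λ] A) (q : A →ₗ[Λ] U),
      q.comp j = LinearMap.id → h.comp j = 0 → Subsingleton U) (n : ℕ) :
    ∀ (U : Type) [AddCommGroup U] [Module Λ U] [IsArtinian Λ U] [IsNoetherian Λ U]
      (j : U →ₗ[Λ] (Fin n → A)) (q : (Fin n → A) →ₗ[Λ] U), q.comp j = LinearMap.id →
      (∀ u k, h (j u k) = 0) → Subsingleton U := by
  induction n with
  | zero =>
    intro U _ _ _ _ j q hq _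
    refine ⟨fun x y => ?_⟩
    rw [← LinearMap.id_apply (R := Λ) x, ← LinearMap.id_apply (R := Λ) y, ← hq]
    exact congrArg q (Subsingleton.elim _ _)
  | succ n ih =>
    intro U _ _ _ _ j q hq hk
    let c := Fin.consLinearEquiv Λ (fun _ : Fin (n + 1) => A)
    let i := (LinearMap.fst Λ A (Fin n → A)).comp (c.symm.toLinearMap.comp j)
    let i' := (LinearMap.snd Λ A (Fin n → A)).comp (c.symm.toLinearMap.comp j)
    let p := (q.comp c.toLinearMap).comp (LinearMap.inl Λ A (Fin n → A))
    let p' := (q.comp c.toLinearMap).comp (LinearMap.inr Λ A (Fin n → A))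
    obtain ⟨U₁, U₂, hU, ⟨r, hr⟩, ⟨r', hr'⟩⟩ := exists_isCompl_of_add_eq_id i p i' p' (by
      ext u
      have h1 : q (c (c.symm (j u))) = u := by
        rw [c.apply_symm_apply]; exact LinearMap.congr_fun hq u
      change q (c ((c.symm (j u)).1, 0)) + q (c (0, (c.symm (j u)).2)) = u
      rw [← map_add, ← map_add, Prod.mk_add_mk, add_zero, zero_add]
      exact h1)
    have h1 : Subsingleton U₁ := hA U₁ _ r hr (LinearMap.ext fun u => hk u 0)
    have h2 : Subsingleton U₂ := ih U₂ _ r' hr' (fun u k => hk u k.succ)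
    have e := Submodule.prodEquivOfIsCompl _ _ hU
    exact e.symm.toEquiv.subsingleton

end Fitting

section Summands

variable {Λ : Type} [Ring Λ]

/-! ### Summands, indecomposables and additive closures -/

theorem IsSummand.refl (A : Mdl Λ) : IsSummand Λ A A := ⟨LinearMap.id, LinearMap.id, rfl⟩

theorem IsSummand.trans {A B C : Mdl Λ} (h : IsSummand Λ A B) (h' : IsSummand Λ B C) :
    IsSummand Λ A C := by
  obtain ⟨i, p, hp⟩ := h
  obtain ⟨i', p', hp'⟩ := h'
  refine ⟨i'.comp i, p.comp p', LinearMap.ext fun x => ?_⟩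
  have h1 : p' (i' (i x)) = i x := LinearMap.congr_fun hp' (i x)
  change p (p' (i' (i x))) = x
  rw [h1]
  exact LinearMap.congr_fun hp x

theorem IsoM.isSummand {A B : Mdl Λ} (h : IsoM Λ A B) : IsSummand Λ A B := by
  obtain ⟨e⟩ := h
  exact ⟨e.toLinearMap, e.symm.toLinearMap, LinearMap.ext fun x => e.symm_apply_apply x⟩

theorem IsoM.symm {A B : Mdl Λ} (h : IsoM Λ A B) : IsoM Λ B A := by
  obtain ⟨e⟩ := h
  exact ⟨e.symm⟩

theorem isSummand_inl (A B : Mdl Λ) : IsSummand Λ A (dsum Λ A B) :=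
  ⟨LinearMap.inl Λ A B, LinearMap.fst Λ A B, rfl⟩

theorem isSummand_inr (A B : Mdl Λ) : IsSummand Λ B (dsum Λ A B) :=
  ⟨LinearMap.inr Λ A B, LinearMap.snd Λ A B, rfl⟩

theorem IsSummand.dsum {A B A' B' : Mdl Λ} (h : IsSummand Λ A A') (h' : IsSummand Λ B B') :
    IsSummand Λ (Paper.dsum Λ A B) (Paper.dsum Λ A' B') := by
  obtain ⟨i, p, hp⟩ := h
  obtain ⟨i', p', hp'⟩ := h'
  exact ⟨LinearMap.prodMap i i', LinearMap.prodMap p p', LinearMap.ext fun x =>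
    Prod.ext (LinearMap.congr_fun hp x.1) (LinearMap.congr_fun hp' x.2)⟩

theorem IsSummand.finite {A B : Mdl Λ} (h : IsSummand Λ A B) [Module.Finite Λ B] :
    Module.Finite Λ A := by
  obtain ⟨i, p, hp⟩ := h
  exact Module.Finite.of_surjective p fun x => ⟨i x, LinearMap.congr_fun hp x⟩

instance {A B : Mdl Λ} [Module.Finite Λ A] [Module.Finite Λ B] :
    Module.Finite Λ (dsum Λ A B) :=
  inferInstanceAs (Module.Finite Λ (A × B))

/-- A split monomorphism has a complement. -/
theorem IsSummand.exists_compl {A B : Mdl Λ} (h : IsSummand Λ A B) :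
    ∃ C : Mdl Λ, IsoM Λ B (Paper.dsum Λ A C) := by
  obtain ⟨i, p, hp⟩ := h
  have hp' : ∀ x, p (i x) = x := LinearMap.congr_fun hp
  have hmem : ∀ x, (LinearMap.id - i.comp p : B →ₗ[Λ] B) x ∈ LinearMap.ker p := fun x => by
    simp [hp']
  have e : B ≃ₗ[Λ] A × LinearMap.ker p := LinearEquiv.ofLinearMap
    (p.prod ((LinearMap.id - i.comp p).codRestrict (LinearMap.ker p) hmem))
    (i.coprod (LinearMap.ker p).subtype)
    (by
      refine LinearMap.ext fun x => ?_
      have h2 : p (x.2 : B) = 0 := x.2.2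
      exact Prod.ext (by simp [hp', h2]) (Subtype.ext (by simp [hp', h2])))
    (by
      refine LinearMap.ext fun x => ?_
      simp)
  exact ⟨ModuleCat.of Λ (LinearMap.ker p), ⟨e⟩⟩

variable (Λ) in
/-- The length of a module of finite length as a natural number. -/
def len (A : Mdl Λ) : ℕ := (Module.length Λ A).toNat

theorem IsoM.len_eq {A B : Mdl Λ} (h : IsoM Λ A B) : len Λ A = len Λ B := by
  obtain ⟨e⟩ := h
  exact congrArg ENat.toNat e.length_eq

theorem isSummand_of_isZeroM_right {M U U' : Mdl Λ} (e : IsoM Λ M (dsum Λ U U'))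
    (h : IsZeroM Λ U') : IsSummand Λ M U := by
  have : Subsingleton U' := h
  refine e.isSummand.trans ⟨LinearMap.fst Λ U U', LinearMap.inl Λ U U', LinearMap.ext fun x => ?_⟩
  exact Prod.ext rfl (Subsingleton.elim (α := U') _ _)

theorem isSummand_of_isZeroM_left {M U U' : Mdl Λ} (e : IsoM Λ M (dsum Λ U U'))
    (h : IsZeroM Λ U) : IsSummand Λ M U' := by
  have : Subsingleton U := h
  refine e.isSummand.trans ⟨LinearMap.snd Λ U U', LinearMap.inr Λ U U', LinearMap.ext fun x => ?_⟩
  exact Prod.ext (Subsingleton.elim (α := U) _ _) rfl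

section Artin

variable [IsArtinianRing Λ]

theorem len_dsum (A B : Mdl Λ) [Module.Finite Λ A] [Module.Finite Λ B] :
    len Λ (dsum Λ A B) = len Λ A + len Λ B := by
  have h : Module.length Λ (dsum Λ A B) = Module.length Λ A + Module.length Λ B :=
    Module.length_prod Λ A B
  rw [len, h, ENat.toNat_add Module.length_ne_top Module.length_ne_top]
  rfl

theorem len_pos {A : Mdl Λ} [Module.Finite Λ A] (h : ¬ IsZeroM Λ A) : 0 < len Λ A := by
  have h1 : Nontrivial A := not_subsingleton_iff_nontrivial.1 h
  have h2 : 0 < Module.length Λ A := Module.length_pos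
  exact Nat.pos_of_ne_zero fun h0 => (ENat.toNat_eq_zero.1 h0).elim h2.ne' Module.length_ne_top

/-- Induction on the length, along direct sum decompositions into indecomposables. -/
theorem indec_induction (P : Mdl Λ → Prop) (h0 : ∀ A, IsZeroM Λ A → P A)
    (h1 : ∀ A, Indec Λ A → P A)
    (h2 : ∀ A B M : Mdl Λ, IsoM Λ M (dsum Λ A B) → P A → P B → P M)
    (M : Mdl Λ) (hM : Module.Finite Λ M) : P M := by
  induction hn : len Λ M using Nat.strong_induction_on generalizing M with
  | _ n ih =>
    by_cases hz : IsZeroM Λ M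
    · exact h0 M hz
    by_cases hi : Indec Λ M
    · exact h1 M hi
    have : ∃ A B : Mdl Λ, IsoM Λ M (dsum Λ A B) ∧ ¬ IsZeroM Λ A ∧ ¬ IsZeroM Λ B := by
      by_contra hcon
      refine hi ⟨hz, fun A B hAB => ?_⟩
      by_contra hor
      exact hcon ⟨A, B, hAB, fun h => hor (Or.inl h), fun h => hor (Or.inr h)⟩
    obtain ⟨A, B, e, hA, hB⟩ := this
    have fA : Module.Finite Λ A := ((isSummand_inl A B).trans e.symm.isSummand).finite
    have fB : Module.Finite Λ B := ((isSummand_inr A B).trans e.symm.isSummand).finite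
    have hl := e.len_eq
    rw [len_dsum] at hl
    have pA := len_pos hA
    have pB := len_pos hB
    exact h2 A B M e (ih _ (by omega) A fA rfl) (ih _ (by omega) B fB rfl)

theorem exists_indec_summand {M : Mdl Λ} [hM : Module.Finite Λ M] (h : ¬ IsZeroM Λ M) :
    ∃ V, Indec Λ V ∧ IsSummand Λ V M := by
  refine (indec_induction (fun M => IsZeroM Λ M ∨ ∃ V, Indec Λ V ∧ IsSummand Λ V M)
    (fun A => Or.inl) (fun A hA => Or.inr ⟨A, hA, .refl A⟩) ?_ M hM).resolve_left h
  rintro A B M e (hA | ⟨V, hV, hVA⟩) hB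
  · rcases hB with hB | ⟨V, hV, hVB⟩
    · left
      obtain ⟨e⟩ := e
      have : Subsingleton A := hA
      have : Subsingleton B := hB
      exact e.toEquiv.subsingleton (β := A × B)
    · exact Or.inr ⟨V, hV, (hVB.trans (isSummand_inr A B)).trans e.symm.isSummand⟩
  · exact Or.inr ⟨V, hV, (hVA.trans (isSummand_inl A B)).trans e.symm.isSummand⟩

/-- A summand of `A ⊕ B` is a direct sum of a summand of `A` and a summand of `B`. -/
theorem IsSummand.exists_of_dsum {M A B : Mdl Λ} [Module.Finite Λ M]
    (h : IsSummand Λ M (Paper.dsum Λ A B)) :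
    ∃ U U' : Mdl Λ, IsoM Λ M (Paper.dsum Λ U U') ∧ IsSummand Λ U A ∧ IsSummand Λ U' B := by
  obtain ⟨(i : M →ₗ[Λ] A × B), (p : A × B →ₗ[Λ] M), hp⟩ := h
  obtain ⟨U, U', hU, ⟨r, hr⟩, ⟨r', hr'⟩⟩ := exists_isCompl_of_add_eq_id
    ((LinearMap.fst Λ A B).comp i) (p.comp (LinearMap.inl Λ A B))
    ((LinearMap.snd Λ A B).comp i) (p.comp (LinearMap.inr Λ A B)) (by
      refine LinearMap.ext fun x => ?_
      change p ((i x).1, 0) + p (0, (i x).2) = x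
      rw [← map_add]
      have h1 : (((i x).1, 0) + (0, (i x).2) : A × B) = i x := by
        rw [Prod.mk_add_mk, add_zero, zero_add]
      exact (congrArg p h1).trans (LinearMap.congr_fun hp x))
  exact ⟨ModuleCat.of Λ U, ModuleCat.of Λ U', ⟨(Submodule.prodEquivOfIsCompl _ _ hU).symm⟩,
    ⟨_, r, hr⟩, ⟨_, r', hr'⟩⟩

/-- A nonzero summand of `V ⊕ V` with `V` indecomposable has `V` as a summand. -/
theorem Indec.isSummand_of_summand_dsum_self {V U : Mdl Λ} [Module.Finite Λ V] (hV : Indec Λ V)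
    (hU : ¬ IsZeroM Λ U) (h : IsSummand Λ U (dsum Λ V V)) : IsSummand Λ V U := by
  have fU : Module.Finite Λ U := h.finite
  obtain ⟨A, B, e, hA, hB⟩ := h.exists_of_dsum
  -- a nonzero summand of `V` is all of `V`
  have key : ∀ C, ¬ IsZeroM Λ C → IsSummand Λ C V → IsSummand Λ V C := fun C hC hCV => by
    obtain ⟨D, eD⟩ := hCV.exists_compl
    exact isSummand_of_isZeroM_right eD ((hV.2 C D eD).resolve_left hC)
  by_cases zA : IsZeroM Λ A
  · have zB : ¬ IsZeroM Λ B := fun zB => hU (by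
      obtain ⟨e⟩ := e
      have : Subsingleton A := zA
      have : Subsingleton B := zB
      exact e.toEquiv.subsingleton (β := A × B))
    exact ((key B zB hB).trans (isSummand_inr A B)).trans e.symm.isSummand
  · exact ((key A zA hA).trans (isSummand_inl A B)).trans e.symm.isSummand

/-- Two basic modules without a common indecomposable summand have a basic direct sum. -/
theorem isBasic_dsum {X W : Mdl Λ} [Module.Finite Λ X] [Module.Finite Λ W] (hX : IsBasic Λ X)
    (hW : IsBasic Λ W)
    (h : ∀ V, Indec Λ V → IsSummand Λ V X → ¬ IsSummand Λ V W) : IsBasic Λ (dsum Λ X W) := by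
  intro N hN hNs
  have fN : Module.Finite Λ N := ((isSummand_inl N N).trans hNs).finite
  obtain ⟨V, hV, hVN⟩ := exists_indec_summand hN
  have fV : Module.Finite Λ V := hVN.finite
  obtain ⟨U, U', e, hU, hU'⟩ := ((hVN.dsum hVN).trans hNs).exists_of_dsum
  by_cases zU : IsZeroM Λ U
  · exact hW V hV.1 ((isSummand_of_isZeroM_left e zU).trans hU')
  by_cases zU' : IsZeroM Λ U'
  · exact hX V hV.1 ((isSummand_of_isZeroM_right e zU').trans hU)
  exact h V hV
    ((hV.isSummand_of_summand_dsum_self zU ((isSummand_inl _ _).trans e.symm.isSummand)).trans hU)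
    ((hV.isSummand_of_summand_dsum_self zU' ((isSummand_inr _ _).trans e.symm.isSummand)).trans hU')

end Artin

theorem mem_addOf_of_fintype {A C : Mdl Λ} {ι : Type} [Finite ι]
    (h : IsSummand Λ A (ModuleCat.of Λ (ι → C))) : A ∈ addOf Λ C := by
  obtain ⟨n, ⟨e⟩⟩ := Finite.exists_equiv_fin ι
  exact ⟨n, h.trans (IsoM.isSummand ⟨LinearEquiv.funCongrLeft Λ C e.symm⟩)⟩

theorem pow_mem_addOf (n : ℕ) (C : Mdl Λ) : ModuleCat.of Λ (Fin n → C) ∈ addOf Λ C :=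
  ⟨n, .refl _⟩

theorem self_mem_addOf (C : Mdl Λ) : C ∈ addOf Λ C :=
  mem_addOf_of_fintype (ι := Unit) (IsoM.isSummand ⟨(LinearEquiv.funUnique Unit Λ C).symm⟩)

theorem IsSummand.mem_addOf {A B C : Mdl Λ} (h : IsSummand Λ A B) (hB : B ∈ addOf Λ C) :
    A ∈ addOf Λ C := by
  obtain ⟨n, hn⟩ := hB
  exact ⟨n, h.trans hn⟩

theorem zero_mem_addOf {A : Mdl Λ} (h : IsZeroM Λ A) (C : Mdl Λ) : A ∈ addOf Λ C := by
  have : Subsingleton A := h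
  exact ⟨0, 0, 0, LinearMap.ext fun x => Subsingleton.elim (α := A) _ _⟩

theorem dsum_mem_addOf {A B C : Mdl Λ} (hA : A ∈ addOf Λ C) (hB : B ∈ addOf Λ C) :
    dsum Λ A B ∈ addOf Λ C := by
  obtain ⟨n, hn⟩ := hA
  obtain ⟨m, hm⟩ := hB
  exact mem_addOf_of_fintype (ι := Fin n ⊕ Fin m) ((hn.dsum hm).trans
    (IsoM.isSummand ⟨(LinearEquiv.sumArrowLequivProdArrow _ _ Λ C).symm⟩))

theorem addOf_trans {A B C : Mdl Λ} (hA : A ∈ addOf Λ B) (hB : B ∈ addOf Λ C) :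
    A ∈ addOf Λ C := by
  obtain ⟨n, hn⟩ := hA
  obtain ⟨m, i, p, hp⟩ := hB
  refine mem_addOf_of_fintype (ι := Fin n × Fin m) (hn.trans (IsSummand.trans
    (B := ModuleCat.of Λ (Fin n → Fin m → C)) ?_
    (IsoM.isSummand ⟨(LinearEquiv.curry Λ C (Fin n) (Fin m)).symm⟩)))
  exact ⟨LinearMap.pi fun k => i.comp (LinearMap.proj k),
    LinearMap.pi fun k => p.comp (LinearMap.proj k),
    LinearMap.ext fun x => funext fun k => LinearMap.congr_fun hp (x k)⟩

theorem finite_of_mem_addOf {A C : Mdl Λ} [Module.Finite Λ C] (h : A ∈ addOf Λ C) :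
    Module.Finite Λ A := by
  obtain ⟨n, hn⟩ := h
  have : Module.Finite Λ (ModuleCat.of Λ (Fin n → C)) :=
    inferInstanceAs (Module.Finite Λ (Fin n → C))
  exact hn.finite

/-- Every finitely generated `C` has the same additive closure as a basic module. -/
theorem exists_basic_addOf [IsArtinianRing Λ] (C : Mdl Λ) [Module.Finite Λ C] :
    ∃ I : Mdl Λ, IsBasic Λ I ∧ addOf Λ I = addOf Λ C := by
  -- a module of minimal length among those with the given additive closure
  let S : Set (Mdl Λ) := {I | I ∈ addOf Λ C ∧ C ∈ addOf Λ I}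
  have hS : S.Nonempty := ⟨C, self_mem_addOf C, self_mem_addOf C⟩
  obtain ⟨I, ⟨hI, hCI⟩, hmin⟩ := exists_minimalFor_of_wellFoundedLT (· ∈ S) (len Λ) hS
  refine ⟨I, fun N hN hNs => ?_, Set.Subset.antisymm (fun A hA => addOf_trans hA hI)
    fun A hA => addOf_trans hA hCI⟩
  have fI : Module.Finite Λ I := finite_of_mem_addOf hI
  obtain ⟨D, e⟩ := hNs.exists_compl
  have fD : Module.Finite Λ D := ((isSummand_inr _ D).trans e.symm.isSummand).finite
  have fN : Module.Finite Λ N := ((isSummand_inl N N).trans hNs).finite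
  have hJ : IsSummand Λ (dsum Λ N D) I :=
    (((isSummand_inl N N).dsum (.refl D))).trans e.symm.isSummand
  have hIJ : I ∈ addOf Λ (dsum Λ N D) :=
    e.isSummand.mem_addOf (dsum_mem_addOf
      (dsum_mem_addOf ((isSummand_inl N D).mem_addOf (self_mem_addOf _))
        ((isSummand_inl N D).mem_addOf (self_mem_addOf _)))
      ((isSummand_inr N D).mem_addOf (self_mem_addOf _)))
  have h1 := hmin (j := dsum Λ N D) ⟨hJ.mem_addOf hI, addOf_trans hCI hIJ⟩
  have h2 := e.len_eq
  have h3 := len_pos hN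
  rw [len_dsum, len_dsum] at h2
  rw [len_dsum] at h1
  omega

end Summands

section Torf

variable {Λ : Type} [Ring Λ] {F : Set (Mdl Λ)}

/-! ### Torsion-free classes and their split injectives -/

theorem IsTorf.finite (hF : IsTorf Λ F) {M : Mdl Λ} (h : M ∈ F) : Module.Finite Λ M := hF.1 h

variable [IsArtinianRing Λ]

theorem IsTorf.sub (hF : IsTorf Λ F) {M N : Mdl Λ} (hN : N ∈ F) (f : M →ₗ[Λ] N)
    (hf : Injective f) : M ∈ F := by
  have := hF.finite hN
  exact hF.2.2.2 M N (Module.Finite.of_injective f hf) hN ⟨f, hf⟩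

theorem IsTorf.summand (hF : IsTorf Λ F) {M N : Mdl Λ} (hN : N ∈ F) (h : IsSummand Λ M N) :
    M ∈ F := by
  obtain ⟨i, p, hp⟩ := h
  exact hF.sub hN i (LeftInverse.injective (LinearMap.congr_fun hp))

theorem IsTorf.ext (hF : IsTorf Λ F) {A E B : Mdl Λ} {f : A →ₗ[Λ] E} {g : E →ₗ[Λ] B}
    (h : IsSESeq Λ f g) (hA : A ∈ F) (hB : B ∈ F) : E ∈ F := by
  have := hF.finite hA
  have := hF.finite hB
  have : IsNoetherian Λ E := isNoetherian_of_range_eq_ker f g h.2.2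
  exact hF.2.2.1 A E B f g h hA hB (show Module.Finite Λ E from inferInstance)

theorem IsTorf.dsum (hF : IsTorf Λ F) {A B : Mdl Λ} (hA : A ∈ F) (hB : B ∈ F) :
    Paper.dsum Λ A B ∈ F :=
  hF.ext (E := Paper.dsum Λ A B) (f := LinearMap.inl Λ A B) (g := LinearMap.snd Λ A B)
    ⟨LinearMap.inl_injective, LinearMap.snd_surjective, LinearMap.range_inl Λ A B⟩ hA hB

theorem IsTorf.pow (hF : IsTorf Λ F) {A : Mdl Λ} (hA : A ∈ F) (n : ℕ) :
    ModuleCat.of Λ (Fin n → A) ∈ F := by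
  induction n with
  | zero =>
    obtain ⟨Z, hZ, _⟩ := hF.2.1
    exact hF.sub hZ (0 : (Fin 0 → A) →ₗ[Λ] Z) fun x y _ => Subsingleton.elim x y
  | succ n ih =>
    let c := Fin.consLinearEquiv Λ (fun _ : Fin (n + 1) => A)
    exact hF.sub (hF.dsum hA ih) (c.symm.toLinearMap : (Fin (n + 1) → A) →ₗ[Λ] _)
      c.symm.injective

theorem IsTorf.of_mem_addOf (hF : IsTorf Λ F) {A C : Mdl Λ} (hC : C ∈ F) (h : A ∈ addOf Λ C) :
    A ∈ F := by
  obtain ⟨n, hn⟩ := h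
  exact hF.summand (hF.pow hC n) hn

theorem SplitInjIn.summand (hF : IsTorf Λ F) {S P : Mdl Λ} (hP : SplitInjIn Λ F P)
    (h : IsSummand Λ S P) : SplitInjIn Λ F S := by
  refine ⟨hF.summand hP.1 h, fun Y hY f hf => ?_⟩
  obtain ⟨C, ⟨e⟩⟩ := h.exists_compl
  -- the retraction of `S ⊕ C → Y ⊕ C` restricts to one of `S → Y`
  let e' : P ≃ₗ[Λ] S × C := e
  have hC : C ∈ F := hF.summand hP.1 ((isSummand_inr S C).trans (IsoM.symm ⟨e⟩).isSummand)
  let g : P →ₗ[Λ] Y × C := (LinearMap.prodMap f LinearMap.id).comp e'.toLinearMap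
  have hg : Injective g := (Function.Injective.prodMap hf injective_id).comp e'.injective
  obtain ⟨(r : Y × C →ₗ[Λ] P), hr⟩ := hP.2 (dsum Λ Y C) (hF.dsum hY hC) g hg
  refine ⟨(LinearMap.fst Λ S C).comp (e'.toLinearMap.comp (r.comp (LinearMap.inl Λ Y C))),
    LinearMap.ext fun x => ?_⟩
  have h1 : r (g (e'.symm (x, 0))) = e'.symm (x, 0) := LinearMap.congr_fun hr _
  have h2 : g (e'.symm (x, 0)) = (f x, 0) := by simp [g]
  rw [h2] at h1
  change (e' (r (f x, 0))).1 = x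
  rw [h1, e'.apply_symm_apply]

/-- If `D` is injective and `h : P → D` is a right `F`-approximation without
nonzero direct summand of `P` in its kernel, then all powers of `P` are split injective. -/
theorem splitInj_pow (hF : IsTorf Λ F) {P D : Mdl Λ} (hP : P ∈ F) (h : P →ₗ[Λ] D)
    (hD : ∀ (A Y : Mdl Λ) (i : A →ₗ[Λ] Y), Injective i → ∀ e : A →ₗ[Λ] D,
      ∃ e' : Y →ₗ[Λ] D, e'.comp i = e)
    (happ : ∀ C ∈ F, ∀ f : C →ₗ[Λ] D, ∃ g : C →ₗ[Λ] P, h.comp g = f)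
    (hmin : ∀ (U : Type) [AddCommGroup U] [Module Λ U] (j : U →ₗ[Λ] P) (q : P →ₗ[Λ] U),
      q.comp j = LinearMap.id → h.comp j = 0 → Subsingleton U) (n : ℕ) :
    SplitInjIn Λ F (ModuleCat.of Λ (Fin n → P)) := by
  refine ⟨hF.pow hP n, fun Y hY (f : (Fin n → P) →ₗ[Λ] Y) hf => ?_⟩
  have := hF.finite hP
  have h1 : ∀ k : Fin n, ∃ g : Y →ₗ[Λ] P, (h.comp g).comp f = h.comp (LinearMap.proj k) := by
    intro k
    obtain ⟨e', he'⟩ := hD (ModuleCat.of Λ (Fin n → P)) Y f hf (h.comp (LinearMap.proj k))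
    obtain ⟨g, hg⟩ := happ Y hY e'
    exact ⟨g, by rw [hg]; exact he'⟩
  choose g hg using h1
  let e : (Fin n → P) →ₗ[Λ] (Fin n → P) := (LinearMap.pi g).comp f
  have he : ∀ x k, h (e x k) = h (x k) := fun x k => LinearMap.congr_fun (hg k) x
  -- the complement `U'` on which `1 - e` splits is killed by `hⁿ`, hence zero
  obtain ⟨U, U', hU, ⟨r, hr⟩, ⟨r', hr'⟩⟩ := exists_isCompl_of_add_eq_id
    e LinearMap.id (LinearMap.id - e) LinearMap.id (by ext; simp)
  have hU' : Subsingleton U' := subsingleton_of_killed h hmin n U' _ r' hr' (fun u k => by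
    change h ((u : Fin n → P) k - e u k) = 0
    rw [map_sub, he, sub_self])
  have hU1 : ∀ x, x ∈ U := by
    have h2 : U' = ⊥ := Submodule.subsingleton_iff_eq_bot.1 hU'
    have h3 : U = ⊤ := by simpa [h2] using hU.sup_eq_top
    simp [h3]
  refine ⟨U.subtype.comp (r.comp (LinearMap.pi g)), LinearMap.ext fun x => ?_⟩
  exact congrArg Subtype.val (LinearMap.congr_fun hr ⟨x, hU1 x⟩)

/-- If `D` is an injective cogenerator with a right `F`-approximation, the minimal right
approximation `P → D` has `add P` equal to the split injectives of `F`, and `P` cogenerates `F`. -/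
theorem exists_splitInj_cogen (hF : IsTorf Λ F) (D : Mdl Λ)
    (hD : ∀ (A Y : Mdl Λ) (i : A →ₗ[Λ] Y), Injective i → ∀ e : A →ₗ[Λ] D,
      ∃ e' : Y →ₗ[Λ] D, e'.comp i = e)
    (hcog : ∀ M : Mdl Λ, Module.Finite Λ M →
      ∃ (n : ℕ) (f : M →ₗ[Λ] (Fin n → D)), Injective f)
    (hex : ∃ P ∈ F, ∃ h : P →ₗ[Λ] D, ∀ C ∈ F, ∀ f : C →ₗ[Λ] D,
      ∃ g : C →ₗ[Λ] P, h.comp g = f) :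
    ∃ P ∈ F, addOf Λ P = {S | SplitInjIn Λ F S} ∧
      ∀ M ∈ F, ∃ (n : ℕ) (f : M →ₗ[Λ] (Fin n → P)), Injective f := by
  obtain ⟨P, ⟨hP, h, happ⟩, hminl⟩ := exists_minimalFor_of_wellFoundedLT (fun P : Mdl Λ =>
    P ∈ F ∧ ∃ h : P →ₗ[Λ] D, ∀ C ∈ F, ∀ f : C →ₗ[Λ] D, ∃ g : C →ₗ[Λ] P, h.comp g = f)
    (len Λ) hex
  have fP := hF.finite hP
  have hmin : ∀ (U : Type) [AddCommGroup U] [Module Λ U] (j : U →ₗ[Λ] P) (q : P →ₗ[Λ] U),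
      q.comp j = LinearMap.id → h.comp j = 0 → Subsingleton U := by
    intro U _ _ j q hq hj
    by_contra hU
    have hq' : ∀ u, q (j u) = u := LinearMap.congr_fun hq
    have hj' : ∀ u, h (j u) = 0 := LinearMap.congr_fun hj
    -- the restriction of `h` to the complement `ker q` is a shorter approximation
    have h1 := hminl (j := ModuleCat.of Λ (LinearMap.ker q))
      ⟨hF.sub hP (LinearMap.ker q).subtype (Submodule.injective_subtype _),
        h.comp (LinearMap.ker q).subtype, fun C hC f => by
          obtain ⟨g, hg⟩ := happ C hC f
          refine ⟨(g - j.comp (q.comp g)).codRestrict (LinearMap.ker q)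
            fun x => by simp [hq'], LinearMap.ext fun x => ?_⟩
          have h2 : h (g x - j (q (g x))) = f x := by
            rw [map_sub, hj', sub_zero]
            exact LinearMap.congr_fun hg x
          exact h2⟩
    have h3 : LinearMap.ker q ≠ ⊤ := fun htop => hU ⟨fun u v => by
      rw [← hq' u, ← hq' v, LinearMap.ker_eq_top.1 htop]; rfl⟩
    have h4 : Module.length Λ (LinearMap.ker q) < Module.length Λ P := Submodule.length_lt h3
    have h5 : len Λ (ModuleCat.of Λ (LinearMap.ker q)) < len Λ P :=
      Nat.cast_lt (α := ℕ∞) |>.1 (by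
        rw [len, len, ENat.natCast_toNat Module.length_ne_top,
          ENat.natCast_toNat Module.length_ne_top]
        exact h4)
    exact absurd (h1 h5.le) (not_le.2 h5)
  have hcogP : ∀ M ∈ F, ∃ (n : ℕ) (f : M →ₗ[Λ] (Fin n → P)), Injective f := by
    intro M hM
    obtain ⟨n, f, hf⟩ := hcog M (hF.finite hM)
    choose g hg using fun k => happ M hM ((LinearMap.proj k).comp f)
    refine ⟨n, LinearMap.pi g, fun x y hxy => hf (funext fun k => ?_)⟩
    have hx : h (g k x) = f x k := LinearMap.congr_fun (hg k) x
    have hy : h (g k y) = f y k := LinearMap.congr_fun (hg k) y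
    rw [← hx, ← hy]
    exact congrArg h (congrFun hxy k)
  refine ⟨P, hP, Set.Subset.antisymm ?_ ?_, hcogP⟩
  · rintro S ⟨n, hn⟩
    exact (splitInj_pow hF hP h hD happ hmin n).summand hF hn
  · intro S hS
    obtain ⟨n, f, hf⟩ := hcogP S hS.1
    obtain ⟨r, hr⟩ := hS.2 (ModuleCat.of Λ (Fin n → P)) (hF.pow hP n) f hf
    exact ⟨n, f, r, hr⟩

/-- A direct sum of an Ext-injective and a split injective object of `F` is Ext-injective
in `F`. -/
theorem ext1Zero_dsum (hF : IsTorf Λ F) {X W : Mdl Λ} (hW : SplitInjIn Λ F W)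
    (hX : ∀ Y ∈ F, Ext1Zero Λ Y X) {Y : Mdl Λ} (hY : Y ∈ F) :
    Ext1Zero Λ Y (dsum Λ X W) := by
  intro E (f : X × W →ₗ[Λ] E) g hs
  obtain ⟨hf, hg, hfg⟩ := hs
  have hfg' : ∀ x, g (f x) = 0 := fun x => by
    rw [← LinearMap.mem_ker, ← hfg]; exact ⟨x, rfl⟩
  -- `Q = E / X` is an extension of `Y` by `W`
  let N : Submodule Λ E := LinearMap.range (f.comp (LinearMap.inl Λ X W))
  let Q : Mdl Λ := ModuleCat.of Λ (E ⧸ N)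
  let fX : X →ₗ[Λ] E := f.comp (LinearMap.inl Λ X W)
  let fW : W →ₗ[Λ] E ⧸ N := N.mkQ.comp (f.comp (LinearMap.inr Λ X W))
  have hN : N ≤ LinearMap.ker g := by
    rintro _ ⟨x, rfl⟩
    exact hfg' _
  let gQ : (E ⧸ N) →ₗ[Λ] Y := N.liftQ g hN
  have hfW : Injective fW := by
    rw [injective_iff_map_eq_zero]
    intro w hw
    obtain ⟨x, hx⟩ := (Submodule.Quotient.mk_eq_zero N).1 hw
    have h1 : ((x, 0) : X × W) = (0, w) := hf hx
    exact (congrArg Prod.snd h1).symm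
  have hQ : Q ∈ F := by
    refine hF.ext (E := Q) (f := fW) (g := gQ) ⟨hfW, fun y => ?_, ?_⟩ hW.1 hY
    · obtain ⟨x, hx⟩ := hg y
      exact ⟨N.mkQ x, hx⟩
    · apply le_antisymm
      · rintro _ ⟨w, rfl⟩
        exact hfg' _
      · intro z hz
        obtain ⟨x, rfl⟩ := N.mkQ_surjective z
        have hx : x ∈ LinearMap.ker g := hz
        rw [← hfg] at hx
        obtain ⟨⟨a, w⟩, rfl⟩ := hx
        refine ⟨w, (Submodule.Quotient.eq N).2 ⟨-a, ?_⟩⟩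
        change f (-a, 0) = f (0, w) - f (a, w)
        rw [← map_sub]
        simp
  obtain ⟨rW, hrW⟩ := hW.2 Q hQ fW hfW
  have hfX : Injective fX := hf.comp LinearMap.inl_injective
  obtain ⟨s, hs⟩ := hX Q hQ E fX N.mkQ ⟨hfX, N.mkQ_surjective, N.ker_mkQ.symm⟩
  have hexX : Function.Exact fX N.mkQ := LinearMap.exact_iff.2 N.ker_mkQ
  obtain ⟨rX, hrX⟩ := ((hexX.split_tfae hfX N.mkQ_surjective).out 0 1 rfl rfl).1 ⟨s, hs⟩
  -- triangular correction of the pair of retractions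
  let rW' : E →ₗ[Λ] W := rW.comp N.mkQ
  let r : E →ₗ[Λ] X × W :=
    (rX - (rX.comp (f.comp (LinearMap.inr Λ X W))).comp rW').prod rW'
  have hW1 : ∀ x w, rW' (f (x, w)) = w := fun x w => by
    have h1 : (N.mkQ (f (x, w)) : E ⧸ N) = fW w := by
      refine (Submodule.Quotient.eq N).2 ⟨x, ?_⟩
      change f (x, 0) = f (x, w) - f (0, w)
      rw [← map_sub]
      simp
    change rW (N.mkQ (f (x, w))) = w
    rw [h1]
    exact LinearMap.congr_fun hrW w
  have hX1 : ∀ x, rX (f (x, 0)) = x := LinearMap.congr_fun hrX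
  have hr : r.comp f = LinearMap.id := by
    refine LinearMap.ext fun ⟨x, w⟩ => ?_
    change (rX (f (x, w)) - rX (f (0, rW' (f (x, w)))), rW' (f (x, w))) = (x, w)
    rw [hW1, ← map_sub, ← map_sub]
    simp [hX1]
  have hex : Function.Exact f g := LinearMap.exact_iff.2 hfg.symm
  exact ((hex.split_tfae hf hg).out 0 1 rfl rfl).2 ⟨r, hr⟩

end Torf

end Paper

open Paper in
/-- Lemma: let `X` be `τ⁻¹`-rigid and `F` a functorially finite
torsion-free class with `Cogen X ⊆ F ⊆ (τ⁻¹X)^⊥`.  Then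
`X ⊕ (I_s(F)/add X)` is a basic `τ⁻¹`-rigid module with
`Cogen (X ⊕ (I_s(F)/add X)) = F`.  (The module `I_s(F)` exists, and the
conclusion holds for every realization of `I_s(F)` and of the deletion.) -/
theorem stmt_8 (K Λ : Type) [Field K] [Ring Λ] [Algebra K Λ] [FiniteDimensional K Λ]
    (hΛbasic : IsBasic Λ (ModuleCat.of Λ Λ))
    (X : Mdl Λ) (hX : TauInvRigid Λ X) (hXb : IsBasic Λ X)
    (F : Set (Mdl Λ)) (hF : IsTorf Λ F) (hFf : FunctFin Λ F)
    (h1 : Cogen Λ X ⊆ F) (h2 : F ⊆ perpTauInv Λ X) :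
    (∃ I : Mdl Λ, IsMinSplitInj Λ F I) ∧
    ∀ I W : Mdl Λ, IsMinSplitInj Λ F I → IsDeleted Λ I (addOf Λ X) W →
      IsBasic Λ (dsum Λ X W) ∧ TauInvRigid Λ (dsum Λ X W) ∧
      Cogen Λ (dsum Λ X W) = F := by
  have : IsArtinianRing Λ := IsArtinianRing.of_finite K Λ
  let D : Mdl Λ := ModuleCat.of Λ (DualReg K Λ)
  obtain ⟨P, hPF, hPadd, hPcog⟩ := exists_splitInj_cogen hF D
    (fun A Y i hi e => dualReg_extend K Λ i hi e)
    (fun M hM => have : Module.Finite Λ M := hM; dualReg_cogen K Λ M)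
    (hFf.2 D (inferInstanceAs (Module.Finite Λ (DualReg K Λ))))
  have fP := hF.finite hPF
  have fX : Module.Finite Λ X := hX.1
  refine ⟨?_, ?_⟩
  · obtain ⟨I, hI, hIP⟩ := exists_basic_addOf P
    exact ⟨I, hI, hIP.trans hPadd⟩
  rintro I W ⟨hIb, hIadd⟩ ⟨Z, e, hZ, hW⟩
  have hI : SplitInjIn Λ F I := by
    have h := self_mem_addOf I
    rwa [hIadd] at h
  have fI := hF.finite hI.1
  have hWI : IsSummand Λ W I := (isSummand_inl W Z).trans e.symm.isSummand
  have hZI : IsSummand Λ Z I := (isSummand_inr W Z).trans e.symm.isSummand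
  have hWs : SplitInjIn Λ F W := hI.summand hF hWI
  have fW := hWI.finite
  have hXF : X ∈ F := h1 ⟨fX, X, self_mem_addOf X, LinearMap.id, injective_id⟩
  have hTF : dsum Λ X W ∈ F := hF.dsum hXF hWs.1
  have hcogF : Cogen Λ (dsum Λ X W) ⊆ F := by
    rintro M ⟨_, Y, hY, f, hf⟩
    exact hF.sub (hF.of_mem_addOf hTF hY) f hf
  have hXext : ∀ Y ∈ F, Ext1Zero Λ Y X := fun Y hY =>
    (h2 hY).2 Y ⟨hF.finite hY, Y, self_mem_addOf Y, LinearMap.id, injective_id⟩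
  refine ⟨isBasic_dsum hXb ?_ ?_, ⟨hF.finite hTF, fun Y hY =>
    ext1Zero_dsum hF hWs hXext (hcogF hY)⟩, Set.Subset.antisymm hcogF ?_⟩
  · exact fun N hN hNW => hIb N hN (hNW.trans hWI)
  · exact fun V hV hVX hVW => hW V hV hVW (hVX.mem_addOf (self_mem_addOf X))
  · -- `Z` lies in `add X`, by decomposing it into indecomposables
    have hZX : Z ∈ addOf Λ X := by
      refine indec_induction (fun Z => (∀ V, Indec Λ V → IsSummand Λ V Z → V ∈ addOf Λ X) →
        Z ∈ addOf Λ X) (fun A hA _ => zero_mem_addOf hA X) (fun A hA h => h A hA (.refl A))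
        (fun A B M e hA hB h => ?_) Z hZI.finite hZ
      exact e.isSummand.mem_addOf (dsum_mem_addOf
        (hA fun V hV hVA => h V hV ((hVA.trans (isSummand_inl A B)).trans e.symm.isSummand))
        (hB fun V hV hVB => h V hV ((hVB.trans (isSummand_inr A B)).trans e.symm.isSummand)))
    have hIT : I ∈ addOf Λ (dsum Λ X W) :=
      e.isSummand.mem_addOf (dsum_mem_addOf ((isSummand_inr X W).mem_addOf (self_mem_addOf _))
        (addOf_trans hZX ((isSummand_inl X W).mem_addOf (self_mem_addOf _))))
    have hPT : P ∈ addOf Λ (dsum Λ X W) := by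
      have h := self_mem_addOf P
      rw [hPadd, ← hIadd] at h
      exact addOf_trans h hIT
    intro M hM
    obtain ⟨n, f, hf⟩ := hPcog M hM
    exact ⟨hF.finite hM, ModuleCat.of Λ (Fin n → P), addOf_trans (pow_mem_addOf n P) hPT, f, hf⟩
end
end

section
/- Let A be an essentially small abelian length category, let I be a wide interval in torf A, and let F ∈ I (i.e. F is a torsion-free class with I⁻ ⊆ F ⊆ I⁺). Then F = (H_{[F, I⁺]}^⊥ ∩ H_I) * I⁻, where H_{[F,I⁺]} = I⁺ ∩ ⊥F and H_I = I⁺ ∩ ⊥(I⁻). -/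
/-!
Every object `X` of a length category has a torsion sequence `0 → T → X → Q → 0` with respect to a
torsion-free class `F`, i.e. `T ∈ ⊥F` and `Q ∈ F` (`exists_torsion_sequence`): take `T` to be a
minimal subobject with `X / T ∈ F`. If some `f : T → Y` with `Y ∈ F` were nonzero, its kernel `L`
would be strictly smaller, while `X / L` is an extension of `X / T` by `T / L ⊆ Y`, hence in `F`.

If `M ∈ F`, the torsion sequence of `M` for `lo` is the required one: its kernel is a subobject of
`M`, so it lies in `F ⊆ hi`, and it receives no nonzero map from `hi ∩ ⊥F`.

Conversely, as `lo ⊆ F` and `F` is closed under extensions, it suffices that an object `B` of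
`hi` with `Hom(hi ∩ ⊥F, B) = 0` lies in `F`. The torsion part of `B` for `F` lies in `hi ∩ ⊥F`,
so it is zero and `B` embeds into its torsion-free quotient.
-/

/- Framework: subcategories (as sets of objects, considered up to isomorphism)
of an essentially small abelian length category. -/

open CategoryTheory CategoryTheory.Limits

noncomputable section

namespace PaperCat

universe v u

variable (A : Type u) [Category.{v} A] [Abelian A]

/-- `0 → B → E → C → 0` is a short exact sequence. -/
def IsSES {B E C : A} (f : B ⟶ E) (g : E ⟶ C) : Prop :=
  ∃ w : f ≫ g = 0, (ShortComplex.mk f g w).ShortExact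

/-- `𝒞^⊥ = {M | Hom(𝒞, M) = 0}`. -/
def perpR (C : Set A) : Set A := {M | ∀ X ∈ C, ∀ f : X ⟶ M, f = 0}

/-- `⊥𝒞 = {M | Hom(M, 𝒞) = 0}`. -/
def perpL (C : Set A) : Set A := {M | ∀ X ∈ C, ∀ f : M ⟶ X, f = 0}

/-- `ℬ * 𝒞`: objects `E` admitting a short exact sequence `0 → B → E → C → 0`
with `B ∈ ℬ` and `C ∈ 𝒞`. -/
def starProd (B C : Set A) : Set A :=
  {E | ∃ Mb Mc : A, Mb ∈ B ∧ Mc ∈ C ∧ ∃ (f : Mb ⟶ E) (g : E ⟶ Mc), IsSES A f g}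

/-- The zero subcategory. -/
def zeroSet : Set A := {M | IsZero M}

/-- `𝒞` is a torsion-free class: contains `0`, closed under extensions and
subobjects. -/
def IsTorf (C : Set A) : Prop :=
  (∃ Z ∈ C, IsZero Z) ∧
  (∀ (X E Y : A) (f : X ⟶ E) (g : E ⟶ Y), IsSES A f g → X ∈ C → Y ∈ C → E ∈ C) ∧
  (∀ (M N : A) (f : M ⟶ N), Mono f → N ∈ C → M ∈ C)

/-- `F'` covers `F` in the lattice `torf A`. -/
def Covers (F' F : Set A) : Prop :=
  IsTorf A F ∧ IsTorf A F' ∧ F ⊂ F' ∧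
    ∀ G, IsTorf A G → F ⊂ G → G ⊆ F' → G = F'

/-- `pop^G(F)`: the join in `torf A` of `F` together with all covers of `F`
contained in `G`, realized as the intersection of all torsion-free classes
containing them. -/
def pop (G F : Set A) : Set A :=
  ⋂₀ {H | IsTorf A H ∧ F ⊆ H ∧ ∀ F', Covers A F' F → F' ⊆ G → F' ⊆ H}

/-- `[Jlo, Jhi]` is a maximal join interval in the interval `[Ilo, Ihi]` of `torf A`. -/
def IsMaxJoinIn (Jlo Jhi Ilo Ihi : Set A) : Prop :=
  IsTorf A Jlo ∧ IsTorf A Jhi ∧ Ilo ⊆ Jlo ∧ Jlo ⊆ Jhi ∧ Jhi ⊆ Ihi ∧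
    Jhi = pop A Ihi Jlo

/-- The heart `G ∩ ⊥F` of an interval `[F, G]` of torsion-free classes. -/
def heart (F G : Set A) : Set A := G ∩ perpL A F

/-- `𝒞` is a wide subcategory: closed under isomorphisms, extensions, kernels
and cokernels (and contains `0`). -/
def IsWide (C : Set A) : Prop :=
  (∀ M N : A, Nonempty (M ≅ N) → M ∈ C → N ∈ C) ∧
  (∃ Z ∈ C, IsZero Z) ∧
  (∀ (X E Y : A) (f : X ⟶ E) (g : E ⟶ Y), IsSES A f g → X ∈ C → Y ∈ C → E ∈ C) ∧
  (∀ (M N : A) (f : M ⟶ N), M ∈ C → N ∈ C → kernel f ∈ C ∧ cokernel f ∈ C)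

/-- `𝒞` is an ICE-closed subcategory: closed under isomorphisms, images,
cokernels and extensions (and contains `0`). -/
def IsICE (C : Set A) : Prop :=
  (∀ M N : A, Nonempty (M ≅ N) → M ∈ C → N ∈ C) ∧
  (∃ Z ∈ C, IsZero Z) ∧
  (∀ (X E Y : A) (f : X ⟶ E) (g : E ⟶ Y), IsSES A f g → X ∈ C → Y ∈ C → E ∈ C) ∧
  (∀ (M N : A) (f : M ⟶ N), M ∈ C → N ∈ C → image f ∈ C ∧ cokernel f ∈ C)

/-- `W_L(𝒞)`. -/
def WL (C : Set A) : Set A :=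
  {X | X ∈ C ∧ ∀ Y ∈ C, ∀ f : Y ⟶ X, kernel f ∈ C}

/-- `𝒞` is a torsion class of the abelian (wide) subcategory `W`. -/
def IsTorsIn (W C : Set A) : Prop :=
  C ⊆ W ∧ (∃ Z ∈ C, IsZero Z) ∧
  (∀ (X E Y : A) (f : X ⟶ E) (g : E ⟶ Y),
      IsSES A f g → X ∈ C → Y ∈ C → E ∈ W → E ∈ C) ∧
  (∀ (M N : A) (g : M ⟶ N), Epi g → M ∈ C → N ∈ W → N ∈ C)

/-- An ICE-sequence. -/
def IsICESeq (C : ℤ → Set A) : Prop :=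
  ∀ k : ℤ, IsICE A (C k) ∧ IsTorsIn A (WL A (C k)) (C (k + 1))

/-- The ICE-sequence `C` has length `m`. -/
def ICESeqLen (C : ℤ → Set A) (m : ℕ) : Prop :=
  C 1 = zeroSet A ∧ C (-(m : ℤ)) = Set.univ

/-- Contravariant finiteness of `C` in `B` (left approximations). -/
def ContraFinIn (C B : Set A) : Prop :=
  ∀ X ∈ B, ∃ X' ∈ C, ∃ h : X ⟶ X', ∀ C' ∈ C, ∀ f : X ⟶ C', ∃ g : X' ⟶ C', h ≫ g = f

/-- Covariant finiteness of `C` in `B` (right approximations). -/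
def CovFinIn (C B : Set A) : Prop :=
  ∀ X ∈ B, ∃ X' ∈ C, ∃ h : X' ⟶ X, ∀ C' ∈ C, ∀ f : C' ⟶ X, ∃ g : C' ⟶ X', g ≫ h = f

/-- `A` is a length category: every object has a finite filtration, i.e. the
subobject lattices are both Noetherian and Artinian. -/
def IsLengthCat : Prop :=
  ∀ X : A, WellFoundedLT (Subobject X) ∧ WellFoundedGT (Subobject X)

end PaperCat

namespace PaperCat

universe v u

variable {A : Type u} [Category.{v} A] [Abelian A]

/-- For a subobject `k : K ↪ X` with `X / K ∈ F` and a map `f` from `K` to an object of `F`, the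
quotient `X / ker f` is again in `F`, being an extension of `X / K` by `K / ker f`. -/
lemma IsTorf.cokernel_kernel_comp_mem {F : Set A} (hF : IsTorf A F) {K X Y : A} (k : K ⟶ X)
    [Mono k] (hk : cokernel k ∈ F) (hY : Y ∈ F) (f : K ⟶ Y) :
    cokernel (kernel.ι f ≫ k) ∈ F := by
  let S := kernelCokernelCompSequence.snakeInput (kernel.ι f) k
  have hzero : S.δ = 0 := (isZero_kernel_of_mono k).eq_of_src _ _
  have hmono : Mono S.L₃.f := S.L₂'_exact.mono_g hzero
  refine hF.2.1 _ _ _ S.L₃.f S.L₃.g ⟨S.L₃.zero, ?_⟩ ?_ hk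
  · have hepi : Epi S.L₂.g := inferInstanceAs (Epi (biprod.snd : K ⊞ X ⟶ X))
    exact ShortComplex.ShortExact.mk' S.L₃_exact hmono S.epi_L₃_g
  · have hm : Mono (Abelian.factorThruCoimage f) := inferInstance
    exact hF.2.2 _ _ (Abelian.factorThruCoimage f) hm hY

/-- In a length category every object has a torsion sequence for the torsion pair `(⊥F, F)`. -/
lemma IsTorf.exists_torsion_sequence (hlen : IsLengthCat A) {F : Set A} (hF : IsTorf A F) (X : A) :
    ∃ T Q : A, T ∈ perpL A F ∧ Q ∈ F ∧ ∃ (i : T ⟶ X) (p : X ⟶ Q), IsSES A i p := by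
  have hwf : WellFounded ((· < ·) : Subobject X → Subobject X → Prop) := (hlen X).1.wf
  have hne : {K : Subobject X | cokernel K.arrow ∈ F}.Nonempty := by
    obtain ⟨Z, hZ, hZ0⟩ := hF.1
    have h0 : IsZero (cokernel (⊤ : Subobject X).arrow) := isZero_cokernel_of_epi _
    exact ⟨⊤, hF.2.2 _ Z (h0.iso hZ0).hom inferInstance hZ⟩
  obtain ⟨K, hK, hmin⟩ := hwf.has_min _ hne
  refine ⟨(K : A), cokernel K.arrow, ?_, hK, K.arrow, cokernel.π _, cokernel.condition _, ?_⟩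
  · intro Y hY f
    let L : Subobject X := Subobject.mk (kernel.ι f ≫ K.arrow)
    have hLF : cokernel L.arrow ∈ F := by
      let e : cokernel L.arrow ≅ cokernel (kernel.ι f ≫ K.arrow) :=
        cokernel.mapIso _ _ (Subobject.underlyingIso _) (Iso.refl _) (by simp [L])
      exact hF.2.2 _ _ e.hom inferInstance (hF.cokernel_kernel_comp_mem K.arrow hK hY f)
    have hLK : L ≤ K := Subobject.mk_le_of_comm (kernel.ι f) rfl
    have hKL : K ≤ L := by
      by_contra h
      exact hmin L hLF (lt_of_le_not_ge hLK h)
    -- As `K = L`, the inclusion of `K` factors through that of `ker f`.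
    have hfac : K.ofLEMk _ hKL ≫ kernel.ι f = 𝟙 _ := by
      rw [← cancel_mono K.arrow, Category.assoc, Subobject.ofLEMk_comp, Category.id_comp]
    rw [← Category.id_comp f, ← hfac, Category.assoc, kernel.condition, comp_zero]
  · exact ShortComplex.ShortExact.mk'
      (ShortComplex.exact_of_g_is_cokernel _ (cokernelIsCokernel _)) inferInstance inferInstance

/-- An object of `G` without nonzero maps from the heart of `[F, G]` lies in `F`. -/
lemma IsTorf.mem_of_mem_perpR_heart (hlen : IsLengthCat A) {F G : Set A} (hF : IsTorf A F)
    (hG : IsTorf A G) {B : A} (hBG : B ∈ G) (hB : B ∈ perpR A (heart A F G)) : B ∈ F := by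
  obtain ⟨T, Q, hT, hQ, i, p, w, hS⟩ := hF.exists_torsion_sequence hlen B
  have hi : i = 0 := hB T ⟨hG.2.2 _ _ i hS.mono_f hBG, hT⟩ i
  exact hF.2.2 _ _ p (hS.exact.mono_g hi) hQ

end PaperCat

open PaperCat in
/-- Lemma: let `A` be an essentially small abelian length category,
`I = [lo, hi]` a wide interval in `torf A`, and `F ∈ I` a torsion-free class with
`lo ⊆ F ⊆ hi`.  Then `F = (H_{[F, hi]}^⊥ ∩ H_I) * lo`, where
`H_{[F, hi]} = hi ∩ ⊥F` and `H_I = hi ∩ ⊥lo`. -/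
theorem stmt_9 (A : Type u) [CategoryTheory.Category.{v} A] [CategoryTheory.Abelian A]
    [CategoryTheory.EssentiallySmall.{w} A] (hlen : IsLengthCat A)
    (lo hi : Set A) (hlo : IsTorf A lo) (hhi : IsTorf A hi) (hle : lo ⊆ hi)
    (hwide : IsWide A (heart A lo hi))
    (F : Set A) (hF : IsTorf A F) (h1 : lo ⊆ F) (h2 : F ⊆ hi) :
    F = starProd A (perpR A (heart A F hi) ∩ heart A lo hi) lo := by
  ext E
  constructor
  · intro hE
    obtain ⟨T, Q, hT, hQ, i, p, hS⟩ := hlo.exists_torsion_sequence hlen E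
    have hTF : T ∈ F := hF.2.2 _ _ i hS.2.mono_f hE
    exact ⟨T, Q, ⟨fun X hX f => hX.2 T hTF f, h2 hTF, hT⟩, hQ, i, p, hS⟩
  · rintro ⟨B, C, ⟨hB, hBhi, -⟩, hC, f, g, hS⟩
    exact hF.2.1 _ _ _ f g hS (hF.mem_of_mem_perpR_heart hlen hhi hBhi hB) (h1 hC)
end
end

section
/- Let Λ be a finite-dimensional basic algebra, M := mod Λ, and let (C(k))_{k∈ℤ} be an ICE-sequence of length m in M. Then (C(k))_{k∈ℤ} is contravariantly finite if and only if C(k) is a functorially finite torsion class of W_L(C(k−1)) for every −m < k ≤ 0. Moreover, if (C(k))_{k∈ℤ} is contravariantly finite, then W_L(C(k)) and C(k) are both functorially finite subcategories of M for all k. -/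
/-!
Both halves rest on two facts about a single ICE-closed subcategory `C`.

* If `C` is contravariantly finite, so is `W_L(C)` (`contraFin_WL`). An object `X` of `C` has a
  largest quotient in `W_L(C)`: the quotients of `X` in `W_L(C)` are closed under intersection of
  their kernels, because `W_L(C)` contains every subobject in `C` of one of its objects. The
  projection to this quotient is a left approximation, since the image of a map from `X` to an
  object of `W_L(C)` again lies in `W_L(C)`.
* If `W_L(C)` is contravariantly finite, it is also covariantly finite (`covFin_WL`). A left
  approximation `P` of `Λ` generates `W_L(C)`. For a module `X`, the evaluation map `Pⁿ → X` at a
  `K`-basis of `Hom(P, X)`, divided by the largest submodule of its kernel lying in `W_L(C)`, is a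
  right approximation: it is a concrete form of `P ⊗ Hom(P, X) → X` over `End(P)`.

A torsion class `T` of `W_L(C)` is always covariantly finite in `W_L(C)`, by torsion subobjects
(`covFinIn_tors`). Approximations compose, so the functorial finiteness of `W_L(C(k-1))` passes to
`C(k)`, and the equivalence follows by induction on `k` starting from `C(-m) = mod Λ`.
-/


/- Framework: the category `mod Λ` of finitely generated modules over a
finite-dimensional algebra `Λ`, modeled concretely via `ModuleCat Λ` together
with the finiteness predicate `Module.Finite`.  Subcategories are sets of
(bundled) modules.  `τ⁻¹`-rigidity and `(τ⁻¹X)^⊥` are encoded via the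
Auslander–Smalø characterizations
`Hom(τ⁻¹X, M) = 0 ↔ Ext¹(M', X) = 0 for all M' ∈ Cogen M`. -/

open Function

noncomputable section

namespace Paper

section Aux

variable {Λ : Type} [Ring Λ]

theorem exists_greatest_of_sup {α : Type*} [SemilatticeSup α] [WellFoundedGT α] (P : α → Prop)
    (a : α) (ha : P a) (hsup : ∀ x y, P x → P y → P (x ⊔ y)) :
    ∃ x, P x ∧ ∀ y, P y → y ≤ x := by
  obtain ⟨x, hx, hmax⟩ := (wellFounded_gt (α := α)).has_min {x | P x} ⟨a, ha⟩
  refine ⟨x, hx, fun y hy => ?_⟩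
  have h := hmax (x ⊔ y) (hsup x y hx hy)
  have : x = x ⊔ y := by
    by_contra hne
    exact h (lt_of_le_of_ne le_sup_left hne)
  rw [this]
  exact le_sup_right

theorem exists_least_of_inf {α : Type*} [SemilatticeInf α] [WellFoundedLT α] (P : α → Prop)
    (a : α) (ha : P a) (hinf : ∀ x y, P x → P y → P (x ⊓ y)) :
    ∃ x, P x ∧ ∀ y, P y → x ≤ y :=
  exists_greatest_of_sup (α := αᵒᵈ) P a ha hinf

/-! ### Closure properties of `C` and `W_L(C)` -/

namespace IsICE

variable {C : Set (Mdl Λ)}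

theorem iso_mem {M N : Type} [AddCommGroup M] [Module Λ M] [AddCommGroup N] [Module Λ N]
    (hC : IsICE Λ C) (e : M ≃ₗ[Λ] N) (h : ModuleCat.of Λ M ∈ C) : ModuleCat.of Λ N ∈ C :=
  hC.2.1 _ _ ⟨e⟩ h

theorem zero_mem (hC : IsICE Λ C) (M : Type) [AddCommGroup M] [Module Λ M] [Subsingleton M] :
    ModuleCat.of Λ M ∈ C := by
  obtain ⟨Z, hZ, hz⟩ := hC.2.2.1
  have : Subsingleton Z := hz
  exact hC.2.1 Z _ ⟨(0 : Z ≃ₗ[Λ] M)⟩ hZ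

theorem ext_mem (hC : IsICE Λ C) {A E B : Type} [AddCommGroup A] [Module Λ A] [AddCommGroup E]
    [Module Λ E] [AddCommGroup B] [Module Λ B] (f : A →ₗ[Λ] E) (g : E →ₗ[Λ] B)
    (hf : Injective f) (hg : Surjective g) (h : LinearMap.range f = LinearMap.ker g)
    (hA : ModuleCat.of Λ A ∈ C) (hB : ModuleCat.of Λ B ∈ C) : ModuleCat.of Λ E ∈ C := by
  have hfin : Module.Finite Λ E := by
    have : Module.Finite Λ A := hC.1 _ hA
    have : Module.Finite Λ B := hC.1 _ hB
    have : Module.Finite Λ (LinearMap.ker g) := h ▸ inferInstance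
    have : Module.Finite Λ (E ⧸ LinearMap.ker g) :=
      Module.Finite.equiv (g.quotKerEquivOfSurjective hg).symm
    exact Module.Finite.of_submodule_quotient (LinearMap.ker g)
  exact hC.2.2.2.1 (ModuleCat.of Λ A) (ModuleCat.of Λ E) (ModuleCat.of Λ B) f g ⟨hf, hg, h⟩
    hA hB hfin

theorem prod_mem (hC : IsICE Λ C) {A B : Type} [AddCommGroup A] [Module Λ A]
    [AddCommGroup B] [Module Λ B]
    (hA : ModuleCat.of Λ A ∈ C) (hB : ModuleCat.of Λ B ∈ C) : ModuleCat.of Λ (A × B) ∈ C :=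
  hC.ext_mem (LinearMap.inl Λ A B) (LinearMap.snd Λ A B) LinearMap.inl_injective
    LinearMap.snd_surjective (LinearMap.range_inl Λ A B) hA hB

theorem range_mem (hC : IsICE Λ C) {A B : Type} [AddCommGroup A] [Module Λ A]
    [AddCommGroup B] [Module Λ B] (f : A →ₗ[Λ] B)
    (hA : ModuleCat.of Λ A ∈ C) (hB : ModuleCat.of Λ B ∈ C) :
    ModuleCat.of Λ (LinearMap.range f) ∈ C :=
  (hC.2.2.2.2 (ModuleCat.of Λ A) (ModuleCat.of Λ B) hA hB f).1

theorem ker_mem {A B : Type} [AddCommGroup A] [Module Λ A]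
    [AddCommGroup B] [Module Λ B] (f : A →ₗ[Λ] B)
    (hA : ModuleCat.of Λ A ∈ C) (hB : ModuleCat.of Λ B ∈ WL Λ C) :
    ModuleCat.of Λ (LinearMap.ker f) ∈ C :=
  hB.2 (ModuleCat.of Λ A) hA f

/-- A subobject in `C` of an object of `W_L(C)` lies in `W_L(C)`. -/
theorem WL_sub {A B : Type} [AddCommGroup A] [Module Λ A]
    [AddCommGroup B] [Module Λ B] (i : A →ₗ[Λ] B) (hi : Injective i)
    (hA : ModuleCat.of Λ A ∈ C) (hB : ModuleCat.of Λ B ∈ WL Λ C) :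
    ModuleCat.of Λ A ∈ WL Λ C := by
  refine ⟨hA, fun Y hY f => ?_⟩
  have h := hB.2 Y hY (i.comp f)
  have hk : LinearMap.ker (i.comp f) = LinearMap.ker f :=
    LinearMap.ker_comp_of_ker_eq_bot f (LinearMap.ker_eq_bot.2 hi)
  exact hk ▸ h

theorem WL_iso (hC : IsICE Λ C) {A B : Type} [AddCommGroup A] [Module Λ A]
    [AddCommGroup B] [Module Λ B] (e : A ≃ₗ[Λ] B)
    (hA : ModuleCat.of Λ A ∈ WL Λ C) : ModuleCat.of Λ B ∈ WL Λ C :=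
  WL_sub e.symm.toLinearMap e.symm.injective (hC.iso_mem e hA.1) hA

theorem WL_zero (hC : IsICE Λ C) (M : Type) [AddCommGroup M] [Module Λ M] [Subsingleton M] :
    ModuleCat.of Λ M ∈ WL Λ C := by
  refine ⟨hC.zero_mem M, fun Y hY f => ?_⟩
  have hf : LinearMap.ker f = ⊤ := by
    ext y
    simpa using Subsingleton.elim (α := M) _ _
  rw [hf]
  exact hC.iso_mem (M := Y) Submodule.topEquiv.symm hY

theorem WL_range (hC : IsICE Λ C) {A B : Type} [AddCommGroup A] [Module Λ A]
    [AddCommGroup B] [Module Λ B] (f : A →ₗ[Λ] B)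
    (hA : ModuleCat.of Λ A ∈ C) (hB : ModuleCat.of Λ B ∈ WL Λ C) :
    ModuleCat.of Λ (LinearMap.range f) ∈ WL Λ C :=
  WL_sub (LinearMap.range f).subtype (Submodule.injective_subtype _) (hC.range_mem f hA hB.1) hB

theorem WL_ker {A B : Type} [AddCommGroup A] [Module Λ A]
    [AddCommGroup B] [Module Λ B] (f : A →ₗ[Λ] B)
    (hA : ModuleCat.of Λ A ∈ WL Λ C) (hB : ModuleCat.of Λ B ∈ WL Λ C) :
    ModuleCat.of Λ (LinearMap.ker f) ∈ WL Λ C :=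
  WL_sub (LinearMap.ker f).subtype (Submodule.injective_subtype _) (ker_mem f hA.1 hB) hA

theorem WL_prod (hC : IsICE Λ C) {A B : Type} [AddCommGroup A] [Module Λ A]
    [AddCommGroup B] [Module Λ B]
    (hA : ModuleCat.of Λ A ∈ WL Λ C) (hB : ModuleCat.of Λ B ∈ WL Λ C) :
    ModuleCat.of Λ (A × B) ∈ WL Λ C := by
  refine ⟨hC.prod_mem hA.1 hB.1, fun Y hY f => ?_⟩
  -- The kernel of `Y → A × B` is computed one component at a time.
  let f₂ : Y →ₗ[Λ] B := (LinearMap.snd Λ A B).comp f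
  let f₁ : LinearMap.ker f₂ →ₗ[Λ] A := ((LinearMap.fst Λ A B).comp f).comp (Submodule.subtype _)
  have h₂ : ModuleCat.of Λ (LinearMap.ker f₂) ∈ C := ker_mem (A := Y) f₂ hY hB
  have h₁ : ModuleCat.of Λ (LinearMap.ker f₁) ∈ C := ker_mem f₁ h₂ hA
  have hk : (LinearMap.ker f₁).map (LinearMap.ker f₂).subtype = LinearMap.ker f := by
    ext y
    constructor
    · rintro ⟨⟨z, hz⟩, hz', rfl⟩
      exact Prod.ext hz' hz
    · intro hy
      have hy' : f y = 0 := hy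
      have h1 : (f y).1 = 0 := by rw [hy']; rfl
      have h2 : (f y).2 = 0 := by rw [hy']; rfl
      exact ⟨⟨y, h2⟩, h1, rfl⟩
  rw [← hk]
  exact hC.iso_mem (Submodule.equivMapOfInjective _ (Submodule.injective_subtype _) _) h₁

theorem WL_pow (hC : IsICE Λ C) {A : Type} [AddCommGroup A] [Module Λ A]
    (hA : ModuleCat.of Λ A ∈ WL Λ C) (n : ℕ) : ModuleCat.of Λ (Fin n → A) ∈ WL Λ C := by
  induction n with
  | zero => exact hC.WL_zero _
  | succ n ih =>
    exact hC.WL_iso (Fin.consLinearEquiv Λ (fun _ : Fin (n + 1) => A)) (hC.WL_prod hA ih)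

/-- `W_L(C)` is closed under cokernels of monomorphisms. -/
theorem WL_quot (hC : IsICE Λ C) {B : Type} [AddCommGroup B] [Module Λ B] (A : Submodule Λ B)
    (hA : ModuleCat.of Λ A ∈ WL Λ C) (hB : ModuleCat.of Λ B ∈ WL Λ C) :
    ModuleCat.of Λ (B ⧸ A) ∈ WL Λ C := by
  constructor
  · have h := (hC.2.2.2.2 (ModuleCat.of Λ A) (ModuleCat.of Λ B) hA.1 hB.1 A.subtype).2
    exact hC.iso_mem (Submodule.quotEquivOfEq _ _ (Submodule.range_subtype A)) h
  · intro Y hY f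
    -- The pullback `E` of `f` along `B → B ⧸ A` is an extension of `Y` by `A`.
    let E : Submodule Λ (Y × B) := LinearMap.eqLocus
      (LinearMap.comp (f : Y →ₗ[Λ] B ⧸ A) (LinearMap.fst Λ Y B)) (A.mkQ.comp (LinearMap.snd Λ Y B))
    have hmem (x : Y × B) : x ∈ E ↔ (f x.1 : B ⧸ A) = A.mkQ x.2 := Iff.rfl
    let i : A →ₗ[Λ] E := LinearMap.codRestrict E ((LinearMap.inr Λ Y B).comp A.subtype) (by
      intro a
      rw [hmem]
      exact (map_zero f).trans ((Submodule.Quotient.mk_eq_zero A).2 a.2).symm)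
    let p : E →ₗ[Λ] Y := (LinearMap.fst Λ Y B).comp E.subtype
    let q : E →ₗ[Λ] B := (LinearMap.snd Λ Y B).comp E.subtype
    have hE : ModuleCat.of Λ E ∈ C := by
      refine hC.ext_mem i p ?_ ?_ ?_ hA.1 hY
      · intro a b hab
        have := congrArg (fun z : E => z.1.2) hab
        exact Subtype.ext this
      · intro y
        obtain ⟨b, hb⟩ := A.mkQ_surjective (f y)
        exact ⟨⟨(y, b), hb.symm⟩, rfl⟩
      · ext ⟨⟨y, b⟩, hyb⟩
        constructor
        · rintro ⟨a, ha⟩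
          have := congrArg (fun z : E => z.1.1) ha
          exact this.symm
        · intro hy
          have hy' : y = 0 := hy
          subst hy'
          have hb : A.mkQ b = 0 := by
            have := (hmem _).1 hyb
            rw [← this]
            exact map_zero f
          have hb' : b ∈ A := by simpa using hb
          exact ⟨⟨b, hb'⟩, rfl⟩
    have hk : ModuleCat.of Λ (LinearMap.ker q) ∈ C := ker_mem q hE hB
    let φ : LinearMap.ker q →ₗ[Λ] Y := p.comp (LinearMap.ker q).subtype
    have hφ : Injective φ := by
      rintro ⟨⟨⟨y, b⟩, h1⟩, h2⟩ ⟨⟨⟨y', b'⟩, h1'⟩, h2'⟩ h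
      have hb : b = 0 := h2
      have hb' : b' = 0 := h2'
      have hy : y = y' := h
      subst hb hb' hy
      rfl
    have hr : LinearMap.range φ = LinearMap.ker f := by
      ext y
      constructor
      · rintro ⟨⟨⟨⟨y, b⟩, h1⟩, h2⟩, rfl⟩
        have hb : b = 0 := h2
        subst hb
        have := (hmem _).1 h1
        exact this.trans (map_zero _)
      · intro hy
        have hy' : f y = 0 := hy
        refine ⟨⟨⟨(y, 0), ?_⟩, rfl⟩, rfl⟩
        rw [hmem]
        exact hy'.trans (map_zero _).symm
    rw [← hr]
    exact hC.iso_mem (LinearEquiv.ofInjective φ hφ) hk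

theorem WL_sup (hC : IsICE Λ C) {B : Type} [AddCommGroup B] [Module Λ B] (N₁ N₂ : Submodule Λ B)
    (hB : ModuleCat.of Λ B ∈ WL Λ C) (h₁ : ModuleCat.of Λ N₁ ∈ C)
    (h₂ : ModuleCat.of Λ N₂ ∈ C) : ModuleCat.of Λ (N₁ ⊔ N₂ : Submodule Λ B) ∈ WL Λ C := by
  have h := hC.WL_range (N₁.subtype.coprod N₂.subtype) (hC.prod_mem h₁ h₂) hB
  rwa [LinearMap.range_coprod, Submodule.range_subtype, Submodule.range_subtype] at h

end IsICE

/-! ### Approximations -/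

/-- An object of an ICE-closed `C` has a largest quotient in `W_L(C)`, and the projection to it is
a left approximation. -/
theorem contraFinIn_WL [IsArtinianRing Λ] {C : Set (Mdl Λ)} (hC : IsICE Λ C) :
    ContraFinIn Λ (WL Λ C) C := by
  intro X hX
  have : Module.Finite Λ X := hC.1 X hX
  obtain ⟨K, hK, hmin⟩ := exists_least_of_inf
    (fun K : Submodule Λ X => ModuleCat.of Λ (X ⧸ K) ∈ WL Λ C) ⊤ (hC.WL_zero _) (by
      intro K₁ K₂ h₁ h₂
      have h₁₂ := hC.WL_range (A := X) (K₁.mkQ.prod K₂.mkQ) hX (hC.WL_prod h₁ h₂)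
      refine hC.WL_iso ((Submodule.quotEquivOfEq _ _ ?_).trans
        (K₁.mkQ.prod K₂.mkQ).quotKerEquivRange).symm h₁₂
      rw [LinearMap.ker_prod, Submodule.ker_mkQ, Submodule.ker_mkQ])
  refine ⟨_, hK, K.mkQ, fun Y hY f => ?_⟩
  -- The image of `f` is a quotient of `X` in `W_L(C)`, so `K` is contained in `ker f`.
  have hle : K ≤ LinearMap.ker f := hmin _
    (hC.WL_iso f.quotKerEquivRange.symm (hC.WL_range (A := X) (B := Y) f hX hY))
  exact ⟨K.liftQ f hle, K.liftQ_mkQ f hle⟩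

theorem ContraFinIn.trans {A B D : Set (Mdl Λ)} (hAB : A ⊆ B) (h₁ : ContraFinIn Λ A B)
    (h₂ : ContraFinIn Λ B D) : ContraFinIn Λ A D := by
  intro X hX
  obtain ⟨Y, hY, h, hh⟩ := h₂ X hX
  obtain ⟨Z, hZ, h', hh'⟩ := h₁ Y hY
  refine ⟨Z, hZ, h'.comp h, fun U hU f => ?_⟩
  obtain ⟨g, rfl⟩ := hh U (hAB hU) f
  obtain ⟨g', rfl⟩ := hh' U hU g
  exact ⟨g', rfl⟩

theorem CovFinIn.trans {A B D : Set (Mdl Λ)} (hAB : A ⊆ B) (h₁ : CovFinIn Λ A B)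
    (h₂ : CovFinIn Λ B D) : CovFinIn Λ A D := by
  intro X hX
  obtain ⟨Y, hY, h, hh⟩ := h₂ X hX
  obtain ⟨Z, hZ, h', hh'⟩ := h₁ Y hY
  refine ⟨Z, hZ, h.comp h', fun U hU f => ?_⟩
  obtain ⟨g, rfl⟩ := hh U (hAB hU) f
  obtain ⟨g', rfl⟩ := hh' U hU g
  exact ⟨g', rfl⟩

theorem contraFin_WL [IsArtinianRing Λ] {C : Set (Mdl Λ)} (hC : IsICE Λ C)
    (h : ContraFin Λ C) : ContraFin Λ (WL Λ C) :=
  (contraFinIn_WL hC).trans (fun _ hX => hX.1) h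

/-- Torsion subobjects are right approximations. -/
theorem covFinIn_tors [IsNoetherianRing Λ] {C T : Set (Mdl Λ)} (hC : IsICE Λ C)
    (hT : IsICE Λ T) (h : IsTorsIn Λ (WL Λ C) T) : CovFinIn Λ T (WL Λ C) := by
  intro X hX
  have : Module.Finite Λ X := hC.1 X hX.1
  have hTC {M : Mdl Λ} (hM : M ∈ T) : M ∈ C := (h.1 hM).1
  obtain ⟨N, hN, hmax⟩ := exists_greatest_of_sup
    (fun N : Submodule Λ X => ModuleCat.of Λ N ∈ T) ⊥ (hT.zero_mem _) (by
      intro N₁ N₂ h₁ h₂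
      have hs := hC.WL_sup N₁ N₂ hX (hTC h₁) (hTC h₂)
      have hr := LinearMap.range_coprod N₁.subtype N₂.subtype
      rw [Submodule.range_subtype, Submodule.range_subtype] at hr
      rw [← hr] at hs ⊢
      exact h.2.2.2 _ _ (hT.prod_mem h₁ h₂) hs ⟨_, LinearMap.surjective_rangeRestrict _⟩)
  refine ⟨_, hN, N.subtype, fun Y hY f => ?_⟩
  have hr : ModuleCat.of Λ (LinearMap.range f) ∈ T :=
    h.2.2.2 Y _ hY (hC.WL_range (A := Y) (B := X) f (hTC hY) hX)
      ⟨_, LinearMap.surjective_rangeRestrict _⟩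
  have hle := hmax _ hr
  exact ⟨LinearMap.codRestrict N f fun y => hle ⟨y, rfl⟩, rfl⟩

/-- Over a finite-dimensional algebra, `Hom(P, X)` is generated over `End(P)` by finitely many
maps; scalars of `K` suffice as coefficients. -/
theorem exists_finite_generators (K : Type) [Field K] [Algebra K Λ] [FiniteDimensional K Λ]
    (P X : Type) [AddCommGroup P] [Module Λ P] [AddCommGroup X] [Module Λ X]
    [Module.Finite Λ P] [Module.Finite Λ X] :
    ∃ (n : ℕ) (ev : (Fin n → P) →ₗ[Λ] X), ∀ f : P →ₗ[Λ] X,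
      ∃ q : P →ₗ[Λ] (Fin n → P), ev.comp q = f := by
  let _ : Module K P := Module.compHom P (algebraMap K Λ)
  let _ : Module K X := Module.compHom X (algebraMap K Λ)
  have : IsScalarTower K Λ P := IsScalarTower.of_algebraMap_smul fun _ _ => rfl
  have : IsScalarTower K Λ X := IsScalarTower.of_algebraMap_smul fun _ _ => rfl
  have : Module.Finite K P := Module.Finite.trans Λ P
  have : Module.Finite K X := Module.Finite.trans Λ X
  have : Module.Finite K (P →ₗ[Λ] X) :=
    Module.Finite.of_injective (LinearMap.restrictScalarsₗ K Λ P X K)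
      (LinearMap.restrictScalars_injective K)
  let b := Module.finBasis K (P →ₗ[Λ] X)
  refine ⟨_, ∑ i, (b i).comp (LinearMap.proj i), fun f =>
    ⟨LinearMap.pi fun i => b.repr f i • LinearMap.id, ?_⟩⟩
  conv_rhs => rw [← b.sum_repr f]
  ext x
  simp only [LinearMap.comp_apply, LinearMap.sum_apply, LinearMap.proj_apply, LinearMap.pi_apply,
    LinearMap.smul_apply, LinearMap.id_apply]
  exact Finset.sum_congr rfl fun i _ => LinearMap.map_smul_of_tower (b i) _ x

/-- A contravariantly finite `W_L(C)` is covariantly finite: with `P` a left approximation of `Λ`,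
the right approximation of `X` is a power `Pⁿ`, mapping onto the trace of `P` in `X`, modulo the
largest submodule in `W_L(C)` of the kernel. -/
theorem covFin_WL (K : Type) [Field K] [Algebra K Λ] [FiniteDimensional K Λ]
    {C : Set (Mdl Λ)} (hC : IsICE Λ C) (h : ContraFin Λ (WL Λ C)) : CovFin Λ (WL Λ C) := by
  have : IsNoetherianRing Λ := IsNoetherianRing.of_finite K Λ
  intro X hX
  have : Module.Finite Λ X := hX
  obtain ⟨P, hP, u, hu⟩ := h (ModuleCat.of Λ Λ) (Module.Finite.self Λ)
  have : Module.Finite Λ P := hC.1 P hP.1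
  -- Every element of an object of `W_L(C)` is in the image of a map from `P`.
  have hgen (A : Mdl Λ) (hA : A ∈ WL Λ C) (a : A) : ∃ (g : P →ₗ[Λ] A) (x : P), g x = a := by
    obtain ⟨g, hg⟩ := hu A hA (LinearMap.toSpanSingleton Λ A a)
    refine ⟨g, u (1 : Λ), ?_⟩
    have := LinearMap.congr_fun hg (1 : Λ)
    simpa using this
  obtain ⟨n, ev, hev⟩ := exists_finite_generators (Λ := Λ) K P X
  have hPn : ModuleCat.of Λ (Fin n → P) ∈ WL Λ C := hC.WL_pow hP n
  obtain ⟨N, ⟨hN, hNev⟩, hmax⟩ := exists_greatest_of_sup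
    (fun N : Submodule Λ (Fin n → P) => ModuleCat.of Λ N ∈ WL Λ C ∧ N ≤ LinearMap.ker ev) ⊥
    ⟨hC.WL_zero _, bot_le⟩
    (fun N₁ N₂ h₁ h₂ => ⟨hC.WL_sup N₁ N₂ hPn h₁.1.1 h₂.1.1, sup_le h₁.2 h₂.2⟩)
  -- To factor `f : A → X`, cover `A` by a power of `P`, lift along `ev`, and pass to quotients.
  refine ⟨_, hC.WL_quot N hN hPn, N.liftQ ev hNev, fun A hA f => ?_⟩
  have : Module.Finite Λ A := hC.1 A hA.1
  obtain ⟨k, p, hp⟩ : ∃ (k : ℕ) (p : (Fin k → P) →ₗ[Λ] A), Surjective p := by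
    obtain ⟨k, s, hs⟩ := Module.Finite.exists_fin (R := Λ) (M := A)
    choose g x hgx using fun i => hgen A hA (s i)
    refine ⟨k, ∑ i, (g i).comp (LinearMap.proj i), ?_⟩
    rw [← LinearMap.range_eq_top, eq_top_iff, ← hs, Submodule.span_le]
    rintro _ ⟨i, rfl⟩
    refine ⟨Pi.single i (x i), ?_⟩
    rw [LinearMap.sum_apply, Finset.sum_eq_single i]
    · simp [hgx]
    · intro j _ hj
      simp [hj]
    · simp
  obtain ⟨q, hq⟩ : ∃ q : (Fin k → P) →ₗ[Λ] (Fin n → P), ev.comp q = f.comp p := by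
    choose q hq using fun i => hev ((f.comp p).comp (LinearMap.single Λ (fun _ => P) i))
    refine ⟨LinearMap.lsum Λ (fun _ => P) ℕ q, ?_⟩
    refine LinearMap.pi_ext' fun i => ?_
    rw [← hq i]
    ext x
    have : LinearMap.lsum Λ (fun _ => P) ℕ q (Pi.single i x) = q i x :=
      by rw [LinearMap.lsum_piSingle]
    exact congrArg ev this
  -- `ker p` is generated by maps from `P`, and `q` sends their images into `N`.
  have hker : LinearMap.ker p ≤ LinearMap.ker (N.mkQ.comp q) := by
    intro y hy
    obtain ⟨g, x, hgx⟩ := hgen _ (IsICE.WL_ker p (hC.WL_pow hP k) hA) ⟨y, hy⟩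
    let r : P →ₗ[Λ] (Fin n → P) := (q.comp (LinearMap.ker p).subtype).comp g
    have hr : LinearMap.range r ≤ N := by
      refine hmax _ ⟨hC.WL_range (A := P) r hP.1 hPn, ?_⟩
      rintro _ ⟨z, rfl⟩
      have h1 : ev (q (g z).1) = f (p (g z).1) := LinearMap.congr_fun hq _
      have h2 : p (g z).1 = 0 := (g z).2
      rw [h2, map_zero] at h1
      exact h1
    have hqy : q y ∈ N := by
      have := hr ⟨x, rfl⟩
      have e : r x = q y := by
        change q (g x).1 = q y
        rw [hgx]
      rwa [e] at this
    simpa using hqy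
  refine ⟨((LinearMap.ker p).liftQ (N.mkQ.comp q) hker).comp
    (p.quotKerEquivOfSurjective hp).symm.toLinearMap, ?_⟩
  ext a
  obtain ⟨y, rfl⟩ := hp a
  have e : (p.quotKerEquivOfSurjective hp).symm (p y) = (LinearMap.ker p).mkQ y := by
    rw [LinearEquiv.symm_apply_eq]
    rfl
  change N.liftQ ev hNev ((LinearMap.ker p).liftQ (N.mkQ.comp q) hker
    ((p.quotKerEquivOfSurjective hp).symm (p y))) = f (p y)
  rw [e]
  exact LinearMap.congr_fun hq y

/-! ### ICE-sequences of finite length -/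

/-- An ICE-sequence is decreasing, so it is constantly `mod Λ` below an index where it is `mod Λ`. -/
theorem modAll_of_le {C : ℤ → Set (Mdl Λ)} (hICE : IsICESeq Λ C) {m : ℤ}
    (hm : C m = modAll Λ) (k : ℤ) (hk : k ≤ m) : C k = modAll Λ := by
  induction k, hk using Int.leInductionDown with
  | base => exact hm
  | pred k _ ih =>
    refine Set.Subset.antisymm (hICE (k - 1)).1.1 ?_
    intro M hM
    have h := (hICE (k - 1)).2.1
    rw [sub_add_cancel, ih] at h
    exact (h hM).1

theorem zero_of_ge {C : ℤ → Set (Mdl Λ)} (hICE : IsICESeq Λ C) {m : ℤ}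
    (hm : C m = zeroSubcat Λ) (k : ℤ) (hk : m ≤ k) : C k = zeroSubcat Λ := by
  induction k, hk using Int.leInduction with
  | base => exact hm
  | succ k _ ih =>
    refine Set.Subset.antisymm (fun M hM => ih ▸ ((hICE k).2.1 hM).1) ?_
    intro M hM
    have : Subsingleton M := hM
    exact (hICE (k + 1)).1.zero_mem M

theorem contraFin_modAll : ContraFin Λ (modAll Λ) :=
  fun X hX => ⟨X, hX, LinearMap.id, fun _ _ f => ⟨f, rfl⟩⟩

theorem contraFin_zero : ContraFin Λ (zeroSubcat Λ) := by
  intro X _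
  refine ⟨ModuleCat.of Λ PUnit, (inferInstance : Subsingleton PUnit), 0, fun Y hY f => ⟨0, ?_⟩⟩
  have : Subsingleton Y := hY
  ext x
  exact Subsingleton.elim _ _

end Aux

end Paper

open Paper in
/-- Lemma: let `(C k)_{k ∈ ℤ}` be an ICE-sequence of length `m` in
`mod Λ`.  Then it is contravariantly finite iff `C k` is a functorially finite
torsion class of `W_L(C (k-1))` for every `-m < k ≤ 0`; and if it is
contravariantly finite, then `W_L(C k)` and `C k` are functorially finite for
all `k`. -/
theorem stmt_10 (K Λ : Type) [Field K] [Ring Λ] [Algebra K Λ] [FiniteDimensional K Λ]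
    (hΛbasic : IsBasic Λ (ModuleCat.of Λ Λ))
    (m : ℕ) (C : ℤ → Set (Mdl Λ))
    (hICE : IsICESeq Λ C) (hlen : ICESeqLen Λ C m) :
    ((∀ k : ℤ, ContraFin Λ (C k)) ↔
      (∀ k : ℤ, -(m : ℤ) < k → k ≤ 0 →
        IsTorsIn Λ (WL Λ (C (k - 1))) (C k) ∧
        FunctFinIn Λ (C k) (WL Λ (C (k - 1))))) ∧
    ((∀ k : ℤ, ContraFin Λ (C k)) →
      ∀ k : ℤ, FunctFin Λ (WL Λ (C k)) ∧ FunctFin Λ (C k)) := by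
  have : IsNoetherianRing Λ := IsNoetherianRing.of_finite K Λ
  have : IsArtinianRing Λ := IsArtinianRing.of_finite K Λ
  have htors (k : ℤ) : IsTorsIn Λ (WL Λ (C (k - 1))) (C k) := by
    have := (hICE (k - 1)).2
    rwa [sub_add_cancel] at this
  have hcov (k : ℤ) : CovFinIn Λ (C k) (WL Λ (C (k - 1))) :=
    covFinIn_tors (hICE (k - 1)).1 (hICE k).1 (htors k)
  refine ⟨⟨fun h k _ _ => ⟨htors k, ?_, hcov k⟩, fun h => ?_⟩, fun h k => ?_⟩
  · intro X hX
    exact h k X ((hICE (k - 1)).1.1 X hX.1)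
  · have hup (k : ℤ) (hk : -(m : ℤ) ≤ k) : ContraFin Λ (C k) := by
      induction k, hk using Int.leInduction with
      | base =>
        rw [hlen.2]
        exact contraFin_modAll
      | succ k hk ih =>
        by_cases h0 : k + 1 ≤ 0
        · have h' := (h (k + 1) (by omega) h0).2.1
          rw [add_sub_cancel_right] at h'
          exact h'.trans (hICE k).2.1 (contraFin_WL (hICE k).1 ih)
        · rw [zero_of_ge hICE hlen.1 (k + 1) (by omega)]
          exact contraFin_zero
    intro k
    rcases le_total (-(m : ℤ)) k with hk | hk
    · exact hup k hk
    · rw [modAll_of_le hICE hlen.2 k hk]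
      exact contraFin_modAll
  · have hW (j : ℤ) : FunctFin Λ (WL Λ (C j)) :=
      have hj := contraFin_WL (hICE j).1 (h j)
      ⟨hj, covFin_WL K (hICE j).1 hj⟩
    exact ⟨hW k, h k, (hcov k).trans (htors k).1 (hW (k - 1)).2⟩
end
end

section
/- Let A be an essentially small abelian length category and let (C(k))_{k∈ℤ} be an ICE-sequence of length m+1 in A. Write ν⁻¹((C(k))_{k∈ℤ}) = (I₁,…,I_m), and define subcategories F_k for 1 ≤ k ≤ m+1 by reverse induction: F_{m+1} := 0 and F_k := (C(1−k)^⊥ ∩ W_L(C(−k))) * F_{k+1} for 1 ≤ k ≤ m. Then I_k⁻ = F_k for all 1 ≤ k ≤ m+1 (with the convention I_{m+1} := [0, A]). -/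
/-!
Write `F = I_k⁻`, `F₀ = I_{k+1}⁻` and `G = I_{k+1}⁺`, so that `F₀ ⊆ F ⊆ G` and
`C(1-k) = G ∩ ⊥F`. Once `W_L(C(-k)) = G ∩ ⊥F₀` is known, the claim `F = (C(1-k)^⊥ ∩ W_L(C(-k))) * F₀`
is a statement on torsion pairs (`starProd_eq`): the torsion part of an object of `F` with respect
to `F₀` lies in `G ∩ ⊥F₀` and receives no map from `⊥F`; conversely an object of `G` receiving no
map from `G ∩ ⊥F` has zero torsion part with respect to `F`.

The substance is therefore the equality `W_L(G ∩ ⊥F) = pop^G(F) ∩ ⊥F` for torsion-free classes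
`F ⊆ G` such that `G ∩ ⊥F` is closed under cokernels (`WL_heart`); closure under cokernels comes
from ICE-closedness. Simple objects of `W_L` and covers of `F` in `G` determine each other:

* for `S` simple in `W_L`, the torsion-free class generated by `F` and `S` covers `F`
  (`simple_mem_pop`), so filtering an object of `W_L` by simples puts it in `pop`;
* every cover of `F` in `G` contains a simple object of `W_L` (`exists_simple_of_cover`), and a
  nonzero object of `pop ∩ ⊥F` maps nontrivially to one of these simples. The map is an epimorphism
  with kernel in `pop ∩ ⊥F`, so induction on subobjects and closure of `W_L` under extensions
  finish the argument (`heart_pop_subset_WL`).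
-/


/- Framework: subcategories (as sets of objects, considered up to isomorphism)
of an essentially small abelian length category. -/

open CategoryTheory CategoryTheory.Limits

noncomputable section

namespace PaperCat

open scoped ZeroObject

universe v' u'

variable {A : Type u'} [Category.{v'} A] [Abelian A]

/-! ### Induction in a length category -/

/-- In a length category, well-founded induction along proper subobjects. -/
theorem sub_ind (hlen : IsLengthCat A) (P : A → Prop)
    (h : ∀ X, (∀ (Y : A) (i : Y ⟶ X), Mono i → ¬ IsIso i → P Y) → P X) (X : A) : P X := by
  have key : ∀ U : Subobject X, ∀ (Z : A) (j : Z ⟶ X) [Mono j], Subobject.mk j = U → P Z := by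
    intro U
    have := (hlen X).1
    induction U using WellFoundedLT.induction with
    | ind U ih =>
      intro Z j _ hj
      refine h Z fun Y i _ hi => ?_
      refine ih (Subobject.mk (i ≫ j)) ?_ Y (i ≫ j) rfl
      subst hj
      refine lt_of_le_of_ne (Subobject.mk_le_mk_of_comm i rfl) fun heq => hi ?_
      have hc := Subobject.ofMkLEMk_comp (f := j) (g := i ≫ j) heq.ge
      have h2 : Subobject.ofMkLEMk j (i ≫ j) heq.ge ≫ i = 𝟙 Z := by
        rw [← cancel_mono j]; simp [hc]
      have : IsSplitEpi i := ⟨⟨⟨_, h2⟩⟩⟩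
      exact isIso_of_mono_of_epi i
  exact key _ X (𝟙 X) rfl

/-- In a length category, well-founded induction along proper quotients; a quotient is
tracked by its kernel in the subobject lattice. -/
theorem quot_ind (hlen : IsLengthCat A) (P : A → Prop)
    (h : ∀ X, (∀ (Y : A) (p : X ⟶ Y), Epi p → ¬ IsIso p → P Y) → P X) (X : A) : P X := by
  have key : ∀ U : Subobject X, ∀ (Z : A) (p : X ⟶ Z) [Epi p], Subobject.mk (kernel.ι p) = U →
      P Z := by
    intro U
    have := (hlen X).2
    induction U using WellFoundedGT.induction with
    | ind U ih =>
      intro Z p _ hp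
      refine h Z fun Y q _ hq => ?_
      refine ih (Subobject.mk (kernel.ι (p ≫ q))) ?_ Y (p ≫ q) rfl
      subst hp
      refine lt_of_le_of_ne
        (Subobject.mk_le_mk_of_comm (kernel.lift _ (kernel.ι p) (by simp)) (by simp))
        fun heq => hq ?_
      have hc := Subobject.ofMkLEMk_comp (f := kernel.ι (p ≫ q)) (g := kernel.ι p) heq.ge
      have h0 : kernel.ι (p ≫ q) ≫ p = 0 := by rw [← hc, Category.assoc, kernel.condition, comp_zero]
      have h2 : q ≫ Abelian.epiDesc (p ≫ q) p h0 = 𝟙 Z := by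
        rw [← cancel_epi p, ← Category.assoc, Abelian.comp_epiDesc]; simp
      have : IsSplitMono q := ⟨⟨⟨_, h2⟩⟩⟩
      exact isIso_of_mono_of_epi q
  exact key _ X (𝟙 X) rfl

theorem epi_endo_iso (hlen : IsLengthCat A) (X : A) : ∀ e : X ⟶ X, Epi e → IsIso e := by
  induction X using quot_ind hlen with
  | h X ih =>
    intro e he
    by_contra hn
    -- `e` exhibits `X` as a proper quotient of itself, so the induction hypothesis applies to `X`.
    exact hn (ih X e he hn e he)

/-! ### Short exact sequences, pushouts and pullbacks -/

theorem IsSES.mono {B E C : A} {f : B ⟶ E} {g : E ⟶ C} (h : IsSES A f g) : Mono f :=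
  h.2.mono_f

theorem IsSES.epi {B E C : A} {f : B ⟶ E} {g : E ⟶ C} (h : IsSES A f g) : Epi g :=
  h.2.epi_g

theorem IsSES.zero {B E C : A} {f : B ⟶ E} {g : E ⟶ C} (h : IsSES A f g) : f ≫ g = 0 := h.1

theorem IsSES.lift {B E C : A} {f : B ⟶ E} {g : E ⟶ C} (h : IsSES A f g) {Z : A} (x : Z ⟶ E)
    (hx : x ≫ g = 0) : ∃ y : Z ⟶ B, y ≫ f = x := by
  have := h.mono
  obtain ⟨w, h⟩ := h
  exact ⟨h.exact.lift x hx, h.exact.lift_f x hx⟩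

theorem IsSES.desc {B E C : A} {f : B ⟶ E} {g : E ⟶ C} (h : IsSES A f g) {Z : A} (x : E ⟶ Z)
    (hx : f ≫ x = 0) : ∃ y : C ⟶ Z, g ≫ y = x := by
  have := h.epi
  obtain ⟨w, h⟩ := h
  exact ⟨h.exact.desc x hx, h.exact.g_desc x hx⟩

theorem isSES_of_lift {B E C : A} {f : B ⟶ E} {g : E ⟶ C} [Mono f] [Epi g] (w : f ≫ g = 0)
    (hl : ∀ (Z : A) (x : Z ⟶ E), x ≫ g = 0 → ∃ y : Z ⟶ B, y ≫ f = x) : IsSES A f g := by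
  refine ⟨w, ⟨ShortComplex.exact_of_f_is_kernel _ ?_⟩⟩
  exact KernelFork.IsLimit.ofι _ _ (fun x hx => (hl _ x hx).choose)
    (fun x hx => (hl _ x hx).choose_spec)
    (fun x hx m hm => by rw [← cancel_mono f]; exact hm.trans (hl _ x hx).choose_spec.symm)

theorem isSES_of_desc {B E C : A} {f : B ⟶ E} {g : E ⟶ C} [Mono f] [Epi g] (w : f ≫ g = 0)
    (hd : ∀ (Z : A) (x : E ⟶ Z), f ≫ x = 0 → ∃ y : C ⟶ Z, g ≫ y = x) : IsSES A f g := by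
  refine ⟨w, ⟨ShortComplex.exact_of_g_is_cokernel _ ?_⟩⟩
  exact CokernelCofork.IsColimit.ofπ _ _ (fun x hx => (hd _ x hx).choose)
    (fun x hx => (hd _ x hx).choose_spec)
    (fun x hx m hm => by rw [← cancel_epi g]; exact hm.trans (hd _ x hx).choose_spec.symm)

theorem isSES_kernel {E C : A} (g : E ⟶ C) [Epi g] : IsSES A (kernel.ι g) g :=
  isSES_of_lift (by simp) fun _ x hx => ⟨kernel.lift g x hx, by simp⟩

theorem isSES_cokernel {B E : A} (f : B ⟶ E) [Mono f] : IsSES A f (cokernel.π f) :=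
  isSES_of_desc (by simp) fun _ x hx => ⟨cokernel.desc f x hx, by simp⟩

theorem kernel_iso_of_lift {K Y X : A} (k : K ⟶ Y) (f : Y ⟶ X) [Mono k] (w : k ≫ f = 0)
    (hl : ∀ (Z : A) (x : Z ⟶ Y), x ≫ f = 0 → ∃ y : Z ⟶ K, y ≫ k = x) :
    Nonempty (kernel f ≅ K) := by
  obtain ⟨y, hy⟩ := hl _ (kernel.ι f) (by simp)
  exact ⟨⟨y, kernel.lift f k w, by rw [← cancel_mono (kernel.ι f)]; simp [hy],
    by rw [← cancel_mono k]; simp [hy]⟩⟩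

/-- For `T ⊆ K ⊆ M`, the sequence `0 → K/T → M/T → M/K → 0` is exact. Here `M/T` is realized
as the pushout of `M ← K → K/T`. -/
theorem third_iso {T K N M S : A} {i : T ⟶ K} {p : K ⟶ N} {j : K ⟶ M} {g : M ⟶ S}
    (h1 : IsSES A i p) (h2 : IsSES A j g) :
    ∃ (E : A) (e : M ⟶ E) (a : N ⟶ E) (b : E ⟶ S),
      IsSES A (i ≫ j) e ∧ IsSES A a b := by
  have := h1.mono
  have := h1.epi
  have := h2.mono
  have := h2.epi
  have hw : j ≫ g = p ≫ (0 : N ⟶ S) := by rw [h2.zero, comp_zero]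
  have hin : pushout.inl j p ≫ pushout.desc g 0 hw = g := pushout.inl_desc _ _ _
  have : Epi (pushout.desc g 0 hw) := by
    have : Epi (pushout.inl j p ≫ pushout.desc g 0 hw) := by rw [hin]; infer_instance
    exact epi_of_epi (pushout.inl j p) _
  refine ⟨pushout j p, pushout.inl j p, pushout.inr j p, pushout.desc g 0 hw, ?_, ?_⟩
  · refine isSES_of_lift ?_ ?_
    · rw [Category.assoc, pushout.condition, ← Category.assoc, h1.zero, zero_comp]
    · intro Z x hx
      obtain ⟨y, hy⟩ := h2.lift x (by rw [← hin, ← Category.assoc, hx, zero_comp])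
      obtain ⟨z, hz⟩ := h1.lift y (by
        rw [← cancel_mono (pushout.inr j p), Category.assoc, ← pushout.condition,
          ← Category.assoc, hy, hx, zero_comp])
      exact ⟨z, by rw [← Category.assoc, hz, hy]⟩
  · have hinr : pushout.inr j p ≫ pushout.desc g 0 hw = 0 := pushout.inr_desc _ _ _
    refine isSES_of_desc hinr ?_
    intro Z x hx
    obtain ⟨y, hy⟩ := h2.desc (pushout.inl j p ≫ x) (by
      rw [← Category.assoc, pushout.condition, Category.assoc, hx, comp_zero])
    refine ⟨y, pushout.hom_ext ?_ ?_⟩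
    · rw [← Category.assoc, hin, hy]
    · rw [← Category.assoc, hinr, hx, zero_comp]

/-- Pulling back `0 → U → X → Q → 0` along `Y → Q`. -/
theorem pullback_ses {U X Q Y : A} {i : U ⟶ X} {g : X ⟶ Q} (h : IsSES A i g) (f : Y ⟶ Q) :
    IsSES A (pullback.lift (f := g) (g := f) i 0 (by rw [h.zero, zero_comp]))
      (pullback.snd g f) := by
  have := h.mono
  have := h.epi
  have : Mono (pullback.lift (f := g) (g := f) i 0 (by rw [h.zero, zero_comp])) := by
    have : Mono (pullback.lift (f := g) (g := f) i 0 (by rw [h.zero, zero_comp]) ≫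
      pullback.fst g f) := by rw [pullback.lift_fst]; infer_instance
    exact mono_of_mono _ (pullback.fst g f)
  refine isSES_of_lift (pullback.lift_snd _ _ _) ?_
  intro Z x hx
  obtain ⟨y, hy⟩ := h.lift (x ≫ pullback.fst g f) (by
    rw [Category.assoc, pullback.condition, ← Category.assoc, hx, zero_comp])
  exact ⟨y, pullback.hom_ext (by rw [Category.assoc, pullback.lift_fst, hy])
    (by rw [Category.assoc, pullback.lift_snd, hx, comp_zero])⟩

theorem pullback_kernel {X Q Y : A} (g : X ⟶ Q) (f : Y ⟶ Q) :
    Nonempty (kernel (pullback.fst g f) ≅ kernel f) := by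
  have hw : (0 : kernel f ⟶ X) ≫ g = kernel.ι f ≫ f := by rw [zero_comp, kernel.condition]
  have : Mono (pullback.lift (f := g) (g := f) 0 (kernel.ι f) hw) := by
    have : Mono (pullback.lift (f := g) (g := f) 0 (kernel.ι f) hw ≫
      pullback.snd g f) := by rw [pullback.lift_snd]; infer_instance
    exact mono_of_mono _ (pullback.snd g f)
  refine kernel_iso_of_lift (pullback.lift (f := g) (g := f) 0 (kernel.ι f) hw) _
    (pullback.lift_fst _ _ _) ?_
  intro Z x hx
  refine ⟨kernel.lift f (x ≫ pullback.snd g f) (by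
    rw [Category.assoc, ← pullback.condition, ← Category.assoc, hx, zero_comp]), ?_⟩
  exact pullback.hom_ext (by rw [Category.assoc, pullback.lift_fst, comp_zero]; exact hx.symm)
    (by rw [Category.assoc, pullback.lift_snd, kernel.lift_ι])

/-! ### Torsion-free classes and their torsion pairs -/

variable {F G : Set A}

theorem IsTorf.ext (hF : IsTorf A F) {X E Y : A} {f : X ⟶ E} {g : E ⟶ Y} (h : IsSES A f g)
    (hX : X ∈ F) (hY : Y ∈ F) : E ∈ F := hF.2.1 _ _ _ f g h hX hY

theorem IsTorf.sub (hF : IsTorf A F) {M N : A} (f : M ⟶ N) [Mono f] (hN : N ∈ F) : M ∈ F :=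
  hF.2.2 _ _ f inferInstance hN

theorem IsTorf.of_isZero (hF : IsTorf A F) {M : A} (hM : IsZero M) : M ∈ F := by
  obtain ⟨Z, hZ, hz⟩ := hF.1
  have : Mono (0 : M ⟶ Z) := ⟨fun _ _ _ => hM.eq_of_tgt _ _⟩
  exact hF.sub (0 : M ⟶ Z) hZ

theorem isTorf_zeroSet : IsTorf A (zeroSet A) := by
  refine ⟨⟨0, isZero_zero A, isZero_zero A⟩, ?_, ?_⟩
  · intro X E Y f g h hX hY
    refine (IsZero.iff_id_eq_zero E).2 ?_
    obtain ⟨y, hy⟩ := h.lift (𝟙 E) (IsZero.eq_of_tgt hY _ _)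
    rw [← hy, IsZero.eq_of_tgt hX y 0, zero_comp]
  · intro M N f _ hN
    refine (IsZero.iff_id_eq_zero M).2 ?_
    rw [← cancel_mono f]
    exact IsZero.eq_of_tgt hN _ _

theorem isTorf_univ : IsTorf A (Set.univ : Set A) :=
  ⟨⟨0, trivial, isZero_zero A⟩, fun _ _ _ _ _ _ _ _ => trivial, fun _ _ _ _ _ => trivial⟩

theorem isTorf_perpR (T : Set A) : IsTorf A (perpR A T) := by
  refine ⟨⟨0, fun X _ f => (isZero_zero A).eq_of_tgt _ _, isZero_zero A⟩, ?_, ?_⟩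
  · intro X E Y f g h hX hY W hW k
    obtain ⟨y, hy⟩ := h.lift k (hY W hW _)
    rw [← hy, hX W hW y, zero_comp]
  · intro M N f _ hN W hW k
    rw [← cancel_mono f, zero_comp]
    exact hN W hW _

theorem isTorf_sInter (𝒮 : Set (Set A)) (h : ∀ H ∈ 𝒮, IsTorf A H) : IsTorf A (⋂₀ 𝒮) := by
  refine ⟨⟨0, fun H hH => (h H hH).of_isZero (isZero_zero A), isZero_zero A⟩, ?_, ?_⟩
  · intro X E Y f g hs hX hY H hH
    exact (h H hH).ext hs (hX H hH) (hY H hH)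
  · intro M N f _ hN H hH
    exact (h H hH).sub f (hN H hH)

theorem isTorf_pop : IsTorf A (pop A G F) := isTorf_sInter _ fun _ h => h.1

theorem pop_subset (hG : IsTorf A G) (hFG : F ⊆ G) : pop A G F ⊆ G :=
  Set.sInter_subset_of_mem ⟨hG, hFG, fun _ _ h => h⟩

theorem subset_pop : F ⊆ pop A G F := Set.subset_sInter fun _ h => h.2.1

theorem cover_subset_pop {F' : Set A} (h : Covers A F' F) (hG : F' ⊆ G) : F' ⊆ pop A G F :=
  Set.subset_sInter fun _ hH => hH.2.2 F' h hG

theorem perpL_quot {M N : A} (g : M ⟶ N) [Epi g] (hM : M ∈ perpL A F) : N ∈ perpL A F := by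
  intro X hX f
  rw [← cancel_epi g, comp_zero]
  exact hM X hX _

theorem perpL_ext {X E Y : A} {f : X ⟶ E} {g : E ⟶ Y} (h : IsSES A f g)
    (hX : X ∈ perpL A F) (hY : Y ∈ perpL A F) : E ∈ perpL A F := by
  intro W hW k
  obtain ⟨y, hy⟩ := h.desc k (hX W hW _)
  rw [← hy, hY W hW y, comp_zero]

theorem isZero_of_mem_perpL {M : A} (h : M ∈ perpL A F) (h' : M ∈ F) : IsZero M := by
  rw [IsZero.iff_id_eq_zero]; exact h M h' _

/-- The torsion pair `(⊥F, F)` of a torsion-free class. If `M` is not torsion, pass to the kernel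
of a nonzero map from `M` to `F`, whose coimage lies in `F`. -/
theorem torsion_ses (hlen : IsLengthCat A) (hF : IsTorf A F) (M : A) :
    ∃ (T Q : A) (i : T ⟶ M) (p : M ⟶ Q), IsSES A i p ∧ T ∈ perpL A F ∧ Q ∈ F := by
  induction M using sub_ind hlen with
  | h M ih =>
    by_cases hM : M ∈ perpL A F
    · exact ⟨M, _, 𝟙 M, cokernel.π (𝟙 M), isSES_cokernel _, hM,
        hF.of_isZero (isZero_cokernel_of_epi (𝟙 M))⟩
    · have hM' : ¬ ∀ N ∈ F, ∀ f : M ⟶ N, f = 0 := hM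
      push Not at hM'
      obtain ⟨N, hN, f, hf⟩ := hM'
      have hs : IsSES A (kernel.ι (factorThruImage f)) (factorThruImage f) := isSES_kernel _
      obtain ⟨T, Q, i, p, h1, hT, hQ⟩ := ih _ (kernel.ι (factorThruImage f)) inferInstance (by
        intro hiso
        apply hf
        have : factorThruImage f = 0 := by
          rw [← cancel_epi (kernel.ι (factorThruImage f))]; simp
        rw [← image.fac f, this, zero_comp])
      obtain ⟨E, e, a, b, h3, h4⟩ := third_iso h1 hs
      exact ⟨T, E, _, e, h3, hT, hF.ext h4 hQ (hF.sub (image.ι f) hN)⟩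

/-- The inclusion `(⊥F)^⊥ ⊆ F`; testing on monomorphisms is enough, because the torsion part of
`M` is a subobject. -/
theorem mem_of_perp (hlen : IsLengthCat A) (hF : IsTorf A F) {M : A}
    (h : ∀ (T : A) (i : T ⟶ M), Mono i → T ∈ perpL A F → i = 0) : M ∈ F := by
  obtain ⟨T, Q, i, p, hs, hT, hQ⟩ := torsion_ses hlen hF M
  have := hs.mono
  have h0 := h T i inferInstance hT
  have : Mono p := by
    refine Preadditive.mono_of_cancel_zero _ fun x hx => ?_
    obtain ⟨y, hy⟩ := hs.lift x hx
    rw [← hy, h0, comp_zero]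
  exact hF.sub p hQ

theorem isZero_of_mono_zero {T M : A} (i : T ⟶ M) [Mono i] (h : i = 0) : IsZero T := by
  rw [IsZero.iff_id_eq_zero, ← cancel_mono i, h]; simp

/-! ### Closure properties of `W_L` of a heart -/

theorem heart_iso (hG : IsTorf A G) {M N : A} (e : Nonempty (M ≅ N)) (h : M ∈ heart A F G) :
    N ∈ heart A F G := by
  obtain ⟨e⟩ := e
  exact ⟨hG.sub e.inv h.1, perpL_quot e.hom h.2⟩

theorem heart_ext (hG : IsTorf A G) {X E Y : A} {f : X ⟶ E} {g : E ⟶ Y} (h : IsSES A f g)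
    (hX : X ∈ heart A F G) (hY : Y ∈ heart A F G) : E ∈ heart A F G :=
  ⟨hG.ext h hX.1 hY.1, perpL_ext h hX.2 hY.2⟩

theorem heart_image (hG : IsTorf A G) {X Y : A} (f : X ⟶ Y)
    (hX : X ∈ heart A F G) (hY : Y ∈ heart A F G) : image f ∈ heart A F G :=
  ⟨hG.sub (image.ι f) hY.1, perpL_quot (factorThruImage f) hX.2⟩

theorem WL_sub {C : Set A} (hiso : ∀ M N : A, Nonempty (M ≅ N) → M ∈ C → N ∈ C) {X Y : A}
    (i : Y ⟶ X) [Mono i] (hX : X ∈ WL A C) (hY : Y ∈ C) :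
    Y ∈ WL A C := by
  refine ⟨hY, fun Z hZ f => hiso _ _ ?_ (hX.2 Z hZ (f ≫ i))⟩
  exact ⟨kernelCompMono f i⟩

/-- The quotient of an object of `W_L` by a subobject in the heart is in `W_L`: for a map `f` to
the quotient, pull back the projection along `f` and compare kernels. -/
theorem WL_coker (hG : IsTorf A G)
    (hcok : ∀ (M N : A) (f : M ⟶ N), M ∈ heart A F G → N ∈ heart A F G →
      cokernel f ∈ heart A F G) {X S : A} (i : S ⟶ X) [Mono i]
    (hX : X ∈ WL A (heart A F G)) (hS : S ∈ heart A F G) :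
    cokernel i ∈ WL A (heart A F G) := by
  refine ⟨hcok _ _ i hS hX.1, fun Y hY f => ?_⟩
  refine heart_iso hG (pullback_kernel (cokernel.π i) f) (hX.2 _ ?_ _)
  exact heart_ext hG (pullback_ses (isSES_cokernel i) f) hS hY

/-- `W_L` of a heart is closed under extensions: for `f : Y ⟶ X`, the kernel of `f` is the kernel
of the induced map from the kernel of `f ≫ g` to `K`. -/
theorem WL_ext (hG : IsTorf A G) {K X S : A} {i : K ⟶ X} {g : X ⟶ S} (h : IsSES A i g)
    (hK : K ∈ WL A (heart A F G)) (hS : S ∈ WL A (heart A F G)) :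
    X ∈ WL A (heart A F G) := by
  have := h.mono
  refine ⟨heart_ext hG h hK.1 hS.1, fun Y hY f => ?_⟩
  have h1 := hS.2 Y hY (f ≫ g)
  obtain ⟨y, hy⟩ := h.lift (kernel.ι (f ≫ g) ≫ f) (by simp)
  have h2 := hK.2 _ h1 y
  refine heart_iso hG ?_ h2
  obtain ⟨e⟩ := kernel_iso_of_lift (kernel.ι y ≫ kernel.ι (f ≫ g)) f
    (by rw [Category.assoc, ← hy, ← Category.assoc, kernel.condition, zero_comp]) (fun Z x hx => by
      refine ⟨kernel.lift y (kernel.lift (f ≫ g) x (by rw [← Category.assoc, hx, zero_comp])) ?_,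
        by rw [← Category.assoc, kernel.lift_ι, kernel.lift_ι]⟩
      rw [← cancel_mono i, Category.assoc, hy, kernel.lift_ι_assoc, hx, zero_comp])
  exact ⟨e.symm⟩

/-! ### `W_L` of the heart lies in `pop` -/

/-- `S` is a nonzero object of `W_L(𝒞)` such that every nonzero map from `𝒞` to `S` is an
epimorphism. When `𝒞` is closed under images, this says that `S` is simple in `W_L(𝒞)`. -/
def IsSimpleIn (C : Set A) (S : A) : Prop :=
  S ∈ WL A C ∧ ¬ IsZero S ∧ ∀ M ∈ C, ∀ f : M ⟶ S, f ≠ 0 → Epi f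

theorem exists_simple_sub (hlen : IsLengthCat A) (hG : IsTorf A G) (X : A) :
    X ∈ WL A (heart A F G) → ¬ IsZero X →
      ∃ (S : A) (i : S ⟶ X), Mono i ∧ IsSimpleIn (heart A F G) S := by
  induction X using sub_ind hlen with
  | h X ih =>
    intro hX h0
    by_cases hs : ∀ M ∈ heart A F G, ∀ f : M ⟶ X, f ≠ 0 → Epi f
    · exact ⟨X, 𝟙 X, inferInstance, hX, h0, hs⟩
    · push Not at hs
      obtain ⟨M, hM, f, hf, hne⟩ := hs
      obtain ⟨S, i, hi, hS⟩ := ih (image f) (image.ι f) inferInstance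
        (by
          intro hiso
          apply hne
          rw [← image.fac f]
          infer_instance)
        (WL_sub (fun _ _ => heart_iso hG) (image.ι f) hX (heart_image hG f hM hX.1))
        (by
          intro hz
          apply hf
          rw [← image.fac f, hz.eq_of_tgt (factorThruImage f) 0, zero_comp])
      exact ⟨S, i ≫ image.ι f, mono_comp _ _, hS⟩

/-- If every nonzero object of `H ∩ ⊥F` maps nontrivially to the simple object `S`, and there is
such an object, then `S ∈ H`. The maps are epimorphisms with kernel again in `H ∩ ⊥F`, so taking
kernels must eventually yield a monomorphism, hence an isomorphism onto `S`. -/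
theorem simple_mem_of_meet (hlen : IsLengthCat A) {S : A} (hS : IsSimpleIn (heart A F G) S)
    {H : Set A} (hH : IsTorf A H) (hHG : H ⊆ G)
    (hmap : ∀ M ∈ H, M ∈ perpL A F → ¬ IsZero M → ∃ f : M ⟶ S, f ≠ 0) (M : A) :
    M ∈ H → M ∈ perpL A F → ¬ IsZero M → S ∈ H := by
  induction M using sub_ind hlen with
  | h M ih =>
    intro hM hMF h0
    obtain ⟨f, hf⟩ := hmap M hM hMF h0
    have hMC : M ∈ heart A F G := ⟨hHG hM, hMF⟩
    have := hS.2.2 M hMC f hf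
    have hK := hS.1.2 M hMC f
    by_cases hz : IsZero (kernel f)
    · have : Mono f := Preadditive.mono_of_isZero_kernel f hz
      have : IsIso f := isIso_of_mono_of_epi f
      exact hH.sub (inv f) hM
    · refine ih (kernel f) (kernel.ι f) inferInstance ?_ (hH.sub (kernel.ι f) hM) hK.2 hz
      intro hiso
      apply hf
      rw [← cancel_epi (kernel.ι f)]; simp

/-- For `S` simple in `W_L` of the heart, the torsion-free class generated by `F` and `S` is a
cover of `F`, hence is contained in `pop`. -/
theorem simple_mem_pop (hlen : IsLengthCat A) (hF : IsTorf A F) (hG : IsTorf A G) (hFG : F ⊆ G)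
    {S : A} (hS : IsSimpleIn (heart A F G) S) : S ∈ pop A G F := by
  let FS : Set A := ⋂₀ {H | IsTorf A H ∧ F ⊆ H ∧ S ∈ H}
  have hFS : IsTorf A FS := isTorf_sInter _ fun _ h => h.1
  have hSFS : S ∈ FS := fun H hH => hH.2.2
  have hFFS : F ⊆ FS := fun M hM H hH => hH.2.1 hM
  have hmin : ∀ H, IsTorf A H → F ⊆ H → S ∈ H → FS ⊆ H := fun H h1 h2 h3 =>
    Set.sInter_subset_of_mem ⟨h1, h2, h3⟩
  have hSF : S ∉ F := fun h => hS.2.1 (isZero_of_mem_perpL hS.1.1.2 h)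
  have hFSG : FS ⊆ G := hmin G hG hFG hS.1.1.1
  have hcov : Covers A FS F := by
    refine ⟨hF, hFS, ⟨hFFS, fun h => hSF (h hSFS)⟩, fun H hH hFH hHFS => ?_⟩
    refine hHFS.antisymm (hmin H hH hFH.1 ?_)
    -- `H` contains a nonzero object of `⊥F`: the torsion part of an object outside `F`.
    obtain ⟨M0, hM0, hM0F⟩ := Set.exists_of_ssubset hFH
    obtain ⟨T, i, hi, hT, hne⟩ : ∃ (T : A) (i : T ⟶ M0), Mono i ∧ T ∈ perpL A F ∧ i ≠ 0 := by
      by_contra hcon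
      push Not at hcon
      exact hM0F (mem_of_perp hlen hF fun T i hi hT => hcon T i hi hT)
    refine simple_mem_of_meet hlen hS hH (hHFS.trans hFSG) ?_ T (hH.sub i hM0) hT
      (fun hz => hne (hz.eq_of_src _ _))
    intro M hM hMF hMz
    by_contra hcon
    push Not at hcon
    apply hMz
    -- If `M` had no nonzero map to `S`, it would lie in the torsion class `⊥F ∩ ⊥S`, whose right
    -- perpendicular class contains `F` and `S`, hence all of `FS`, hence `M`.
    have hsub : FS ⊆ perpR A {M | M ∈ perpL A F ∧ ∀ f : M ⟶ S, f = 0} :=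
      hmin _ (isTorf_perpR _) (fun N hN X hX f => hX.1 N hN f) (fun X hX f => hX.2 f)
    rw [IsZero.iff_id_eq_zero]
    exact hsub (hHFS hM) M ⟨hMF, hcon⟩ _
  exact cover_subset_pop hcov hFSG hSFS

/-- Objects of `W_L` of the heart lie in `pop`: split off a simple subobject and use induction
on the quotient. -/
theorem WL_subset_pop (hlen : IsLengthCat A) (hF : IsTorf A F) (hG : IsTorf A G) (hFG : F ⊆ G)
    (hcok : ∀ (M N : A) (f : M ⟶ N), M ∈ heart A F G → N ∈ heart A F G →
      cokernel f ∈ heart A F G) (X : A) :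
    X ∈ WL A (heart A F G) → X ∈ pop A G F := by
  induction X using quot_ind hlen with
  | h X ih =>
    intro hX
    by_cases h0 : IsZero X
    · exact isTorf_pop.of_isZero h0
    · obtain ⟨S, i, hi, hS⟩ := exists_simple_sub hlen hG X hX h0
      refine isTorf_pop.ext (isSES_cokernel i) (simple_mem_pop hlen hF hG hFG hS)
        (ih _ (cokernel.π i) inferInstance ?_ (WL_coker hG hcok i hX hS.1.1))
      intro hiso
      refine hS.2.1 (isZero_of_mono_zero i ?_)
      rw [← cancel_mono (cokernel.π i)]; simp

/-! ### The heart of `[F, pop]` lies in `W_L` -/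

/-- A nonzero object of `⊥F` has a minimal nonzero subobject belonging to `⊥F`. -/
theorem exists_minimal (hlen : IsLengthCat A) (X : A) :
    X ∈ perpL A F → ¬ IsZero X →
      ∃ (S : A) (i : S ⟶ X), Mono i ∧ S ∈ perpL A F ∧ ¬ IsZero S ∧
        ∀ M ∈ perpL A F, ∀ f : M ⟶ S, f ≠ 0 → Epi f := by
  induction X using sub_ind hlen with
  | h X ih =>
    intro hX h0
    by_cases hs : ∀ M ∈ perpL A F, ∀ f : M ⟶ X, f ≠ 0 → Epi f
    · exact ⟨X, 𝟙 X, inferInstance, hX, h0, hs⟩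
    · push Not at hs
      obtain ⟨M, hM, f, hf, hne⟩ := hs
      obtain ⟨S, i, hi, hS⟩ := ih (image f) (image.ι f) inferInstance
        (by
          intro hiso
          apply hne
          rw [← image.fac f]
          infer_instance)
        (perpL_quot (factorThruImage f) hM)
        (by
          intro hz
          apply hf
          rw [← image.fac f, hz.eq_of_tgt (factorThruImage f) 0, zero_comp])
      exact ⟨S, i ≫ image.ι f, mono_comp _ _, hS⟩

/-- If `F'` covers `F`, any two nonzero objects `S`, `E` of `F' ∩ ⊥F` admit a nonzero map `S ⟶ E`:
otherwise `F' ∩ S^⊥` would lie strictly between, as it contains `E` but not `S`. -/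
theorem cover_hom_ne_zero {F' : Set A} (hcov : Covers A F' F) {S E : A}
    (hS : S ∈ F') (hSF : S ∈ perpL A F) (hS0 : ¬ IsZero S)
    (hE : E ∈ F') (hEF : E ∈ perpL A F) (hE0 : ¬ IsZero E) :
    ∃ f : S ⟶ E, f ≠ 0 := by
  by_contra hcon
  push Not at hcon
  have hH : IsTorf A (⋂₀ {F', perpR A {S}}) := isTorf_sInter _ (by
    rintro K (rfl | rfl)
    · exact hcov.2.1
    · exact isTorf_perpR _)
  have hEH : E ∈ ⋂₀ {F', perpR A {S}} := by
    rintro K (rfl | rfl)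
    · exact hE
    · rintro X rfl f
      exact hcon f
  have hEq := hcov.2.2.2 _ hH ⟨?_, fun h => hE0 (isZero_of_mem_perpL hEF (h hEH))⟩
    (Set.sInter_subset_of_mem (by simp))
  · have : S ∈ ⋂₀ {F', perpR A {S}} := hEq.symm.subset hS
    have h2 := this (perpR A {S}) (by simp) S rfl (𝟙 S)
    exact hS0 ((IsZero.iff_id_eq_zero S).2 h2)
  · intro N hN
    rintro K (rfl | rfl)
    · exact hcov.2.2.1.1 hN
    · rintro X rfl f
      exact hSF N hN f

/-- Each cover `F'` of `F` inside `G` contains a simple object `S` of `W_L` of the heart, namely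
a minimal object of `F' ∩ ⊥F`. To see that the kernel of `f : Y ⟶ S` is torsion, let `N` be its
torsion-free quotient and `E` the induced extension of `S` by `N`, which is a quotient of `Y`. A
nonzero map `S ⟶ E` splits the extension, so `N` is a quotient of `E ∈ ⊥F` and vanishes. -/
theorem exists_simple_of_cover (hlen : IsLengthCat A) (hF : IsTorf A F)
    {F' : Set A} (hcov : Covers A F' F) (hG : IsTorf A G) (hF'G : F' ⊆ G) :
    ∃ S ∈ F', IsSimpleIn (heart A F G) S := by
  have hF' := hcov.2.1
  obtain ⟨M0, hM0, hM0F⟩ := Set.exists_of_ssubset hcov.2.2.1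
  obtain ⟨T, i, hi, hT, hne⟩ : ∃ (T : A) (i : T ⟶ M0), Mono i ∧ T ∈ perpL A F ∧ i ≠ 0 := by
    by_contra hcon
    push Not at hcon
    exact hM0F (mem_of_perp hlen hF fun T i hi hT => hcon T i hi hT)
  obtain ⟨S, j, hj, hSF, hS0, hmin⟩ := exists_minimal hlen T hT
    (fun hz => hne (hz.eq_of_src _ _))
  have hS : S ∈ F' := hF'.sub j (hF'.sub i hM0)
  refine ⟨S, hS, ⟨⟨hF'G hS, hSF⟩, fun Y hY f => ?_⟩, hS0, fun M hM f hf => hmin M hM.2 f hf⟩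
  refine ⟨hG.sub (kernel.ι f) hY.1, ?_⟩
  by_cases hf : f = 0
  · subst hf
    exact perpL_quot (kernelZeroIsoSource (X := Y) (Y := S)).inv hY.2
  have := hmin Y hY.2 f hf
  obtain ⟨T', N, a, p, hs, hT', hN⟩ := torsion_ses hlen hF (kernel f)
  have := hs.epi
  suffices hNz : IsZero N from
    perpL_ext hs hT' fun W _ k => hNz.eq_of_src _ _
  obtain ⟨E, e, n, b, h3, h4⟩ := third_iso hs (isSES_kernel f)
  have := h3.epi
  have := h4.mono
  have := h4.epi
  have hEF : E ∈ perpL A F := perpL_quot e hY.2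
  have hEF' : E ∈ F' := hF'.ext h4 (hcov.2.2.1.1 hN) hS
  have hE0 : ¬ IsZero E := fun hz => hS0 (by
    rw [IsZero.iff_id_eq_zero, ← cancel_epi b]; exact hz.eq_of_src _ _)
  obtain ⟨s, hs0⟩ := cover_hom_ne_zero hcov hS hSF hS0 hEF' hEF hE0
  have hsb : s ≫ b ≠ 0 := by
    intro h0
    obtain ⟨y, hy⟩ := h4.lift s h0
    exact hs0 (by rw [← hy, hSF N hN y, zero_comp])
  have := epi_endo_iso hlen S (s ≫ b) (hmin S hSF _ hsb)
  -- `inv (s ≫ b) ≫ s` is a section of `b`, so `n` has a retraction `r`, which is zero because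
  -- `E ∈ ⊥F` and `N ∈ F`.
  obtain ⟨r, hr⟩ := h4.lift (𝟙 E - b ≫ inv (s ≫ b) ≫ s) (by
    rw [Preadditive.sub_comp, Category.assoc, Category.assoc, IsIso.inv_hom_id]; simp)
  have hr0 : r = 0 := hEF N hN r
  have : n = 0 := by
    have h5 : n ≫ (𝟙 E - b ≫ inv (s ≫ b) ≫ s) = n := by
      rw [Preadditive.comp_sub, ← Category.assoc n b, h4.zero]; simp
    rw [← h5, ← hr, hr0]; simp
  exact isZero_of_mono_zero n this

/-- Every nonzero `X` in the heart of `[F, pop]` maps nontrivially to a simple object of `W_L`;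
that map is an epimorphism, and induction applies to its kernel. -/
theorem heart_pop_subset_WL (hlen : IsLengthCat A) (hF : IsTorf A F) (hG : IsTorf A G)
    (hFG : F ⊆ G) (X : A) : X ∈ heart A F (pop A G F) → X ∈ WL A (heart A F G) := by
  induction X using sub_ind hlen with
  | h X ih =>
    intro hX
    have hXC : X ∈ heart A F G := ⟨pop_subset hG hFG hX.1, hX.2⟩
    by_cases h0 : IsZero X
    · refine ⟨hXC, fun Y hY f => heart_iso hG ?_ hY⟩
      obtain rfl : f = 0 := h0.eq_of_tgt _ _
      exact ⟨kernelZeroIsoSource.symm⟩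
    obtain ⟨S, hS, f, hf⟩ : ∃ S, IsSimpleIn (heart A F G) S ∧ ∃ f : X ⟶ S, f ≠ 0 := by
      by_contra hcon
      push Not at hcon
      apply h0
      -- `X` would be in the torsion class below, but `pop` is contained in its right perpendicular
      -- class `R`: for each cover `F'`, the class `F' ∩ R` is strictly larger than `F`, so it is `F'`.
      let R : Set A := perpR A {M | M ∈ perpL A F ∧
        ∀ S, IsSimpleIn (heart A F G) S → ∀ f : M ⟶ S, f = 0}
      have hFR : F ⊆ R := fun N hN M hM f => hM.1 N hN f
      have hsub : pop A G F ⊆ R := by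
        refine Set.sInter_subset_of_mem ⟨isTorf_perpR _, hFR, fun F' hcov hF'G => ?_⟩
        obtain ⟨S, hSF', hS⟩ := exists_simple_of_cover hlen hF hcov hG hF'G
        have hH : IsTorf A (⋂₀ {F', R}) := isTorf_sInter _ (by
          rintro K (rfl | rfl)
          · exact hcov.2.1
          · exact isTorf_perpR _)
        have hSH : S ∈ ⋂₀ {F', R} := by
          rintro K (rfl | rfl)
          · exact hSF'
          · exact fun M hM f => hM.2 S hS f
        have hEq := hcov.2.2.2 _ hH
          ⟨?_, fun h => hS.2.1 (isZero_of_mem_perpL hS.1.1.2 (h hSH))⟩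
          (Set.sInter_subset_of_mem (by simp))
        · rw [← hEq]
          exact Set.sInter_subset_of_mem (by simp)
        · intro N hN
          rintro K (rfl | rfl)
          · exact hcov.2.2.1.1 hN
          · exact hFR hN
      rw [IsZero.iff_id_eq_zero]
      exact hsub hX.1 X ⟨hX.2, hcon⟩ _
    have := hS.2.2 X hXC f hf
    refine WL_ext hG (isSES_kernel f) (ih _ (kernel.ι f) inferInstance ?_
      ⟨isTorf_pop.sub (kernel.ι f) hX.1, (hS.1.2 X hXC f).2⟩) hS.1
    intro hiso
    apply hf
    rw [← cancel_epi (kernel.ι f)]; simp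

/-! ### Hearts of maximal join intervals and the recursion -/

/-- If the heart of `[F, G]` is closed under cokernels, its `W_L` is the heart of the maximal join
interval `[F, pop^G F]`. -/
theorem WL_heart (hlen : IsLengthCat A) (hF : IsTorf A F) (hG : IsTorf A G) (hFG : F ⊆ G)
    (hcok : ∀ (M N : A) (f : M ⟶ N), M ∈ heart A F G → N ∈ heart A F G →
      cokernel f ∈ heart A F G) :
    WL A (heart A F G) = heart A F (pop A G F) :=
  Set.Subset.antisymm
    (fun X hX => ⟨WL_subset_pop hlen hF hG hFG hcok X hX, hX.1.2⟩)
    (heart_pop_subset_WL hlen hF hG hFG)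

/-- For `F₀ ⊆ F ⊆ G`, the torsion sequence of an object of `F` with respect to `F₀` exhibits it in
`((G ∩ ⊥F)^⊥ ∩ (G ∩ ⊥F₀)) * F₀`. Conversely, the `F`-torsion part of an object of `G` lies in
`G ∩ ⊥F`, so right orthogonality to `G ∩ ⊥F` forces it to be zero. -/
theorem starProd_eq (hlen : IsLengthCat A) {F₀ : Set A} (hF₀ : IsTorf A F₀) (hF : IsTorf A F)
    (hG : IsTorf A G) (h0 : F₀ ⊆ F) (hFG : F ⊆ G) :
    F = starProd A (perpR A (heart A F G) ∩ heart A F₀ G) F₀ := by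
  ext M
  constructor
  · intro hM
    obtain ⟨T, Q, i, p, hs, hT, hQ⟩ := torsion_ses hlen hF₀ M
    have := hs.mono
    have hTF : T ∈ F := hF.sub i hM
    exact ⟨T, Q, ⟨fun X hX f => hX.2 T hTF f, hFG hTF, hT⟩, hQ, i, p, hs⟩
  · rintro ⟨T, Q, ⟨hT, hTG, -⟩, hQ, i, p, hs⟩
    refine hF.ext hs (mem_of_perp hlen hF fun T' j _ hT' => ?_) (h0 hQ)
    exact hT T' ⟨hG.sub j hTG, hT'⟩ j

end PaperCat


open PaperCat in
/-- Proposition: let `(C k)_{k ∈ ℤ}` be an ICE-sequence of length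
`m + 1` in an essentially small abelian length category `A`, and write
`ν⁻¹((C k)) = (I_1, …, I_m)` (i.e. `(I_1, …, I_m)` is the decreasing sequence of
maximal join intervals, with `I_{m+1} = [0, A]`, whose image under Sakai's
bijection `ν` is `(C k)`).  Define `F (m+1) = 0` and, by reverse induction,
`F k = (C(1-k)^⊥ ∩ W_L(C(-k))) * F (k+1)` for `1 ≤ k ≤ m`.  Then `I_k⁻ = F k`
for all `1 ≤ k ≤ m` (and for `k = m + 1` by convention). -/
theorem stmt_12 (A : Type u) [CategoryTheory.Category.{v} A] [CategoryTheory.Abelian A]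
    [CategoryTheory.EssentiallySmall.{w} A] (hlen : IsLengthCat A)
    (m : ℕ) (C : ℤ → Set A)
    (hICE : IsICESeq A C) (hlenC : ICESeqLen A C (m + 1))
    (lo hi : ℕ → Set A)
    (hlo : lo (m + 1) = zeroSet A) (hhi : hi (m + 1) = Set.univ)
    (hdec : ∀ k, 1 ≤ k → k ≤ m →
      IsMaxJoinIn A (lo k) (hi k) (lo (k + 1)) (hi (k + 1)))
    -- `ν (I_1, …, I_m) = (C k)`:
    (hν0 : ∀ k : ℤ, 0 < k → C k = zeroSet A)
    (hν1 : ∀ k : ℤ, -(m : ℤ) < k → k ≤ 0 →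
      C k = heart A (lo (1 - k).toNat) (hi (2 - k).toNat))
    (hν2 : ∀ k : ℤ, k ≤ -(m : ℤ) → C k = Set.univ)
    (F : ℕ → Set A) (hF1 : F (m + 1) = zeroSet A)
    (hF2 : ∀ k, 1 ≤ k → k ≤ m →
      F k = starProd A (perpR A (C (1 - (k : ℤ))) ∩ WL A (C (-(k : ℤ)))) (F (k + 1))) :
    ∀ k, 1 ≤ k → k ≤ m → lo k = F k := by
  have hloT : ∀ k, 1 ≤ k → k ≤ m + 1 → IsTorf A (lo k) := by
    intro k h1 h2
    rcases Nat.lt_or_eq_of_le h2 with h | rfl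
    · exact (hdec k h1 (by omega)).1
    · rw [hlo]; exact isTorf_zeroSet
  have hhiT : ∀ k, 1 ≤ k → k ≤ m + 1 → IsTorf A (hi k) := by
    intro k h1 h2
    rcases Nat.lt_or_eq_of_le h2 with h | rfl
    · exact (hdec k h1 (by omega)).2.1
    · rw [hhi]; exact isTorf_univ
  have hC : ∀ k : ℕ, 1 ≤ k → k ≤ m → C (1 - (k : ℤ)) = heart A (lo k) (hi (k + 1)) := by
    intro k h1 h2
    rw [hν1 (1 - (k : ℤ)) (by omega) (by omega)]
    congr 2 <;> omega
  have hW : ∀ k : ℕ, 1 ≤ k → k ≤ m →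
      WL A (C (-(k : ℤ))) = heart A (lo (k + 1)) (hi (k + 1)) := by
    intro k h1 h2
    rcases Nat.lt_or_eq_of_le h2 with h | rfl
    · have hd := hdec (k + 1) (by omega) (by omega)
      have hCk := hC (k + 1) (by omega) (by omega)
      have he : (1 : ℤ) - ((k + 1 : ℕ) : ℤ) = -(k : ℤ) := by omega
      rw [he] at hCk
      have hcok := (hICE (-(k : ℤ))).1.2.2.2
      rw [hCk] at hcok
      rw [hCk, WL_heart hlen hd.1 (hhiT _ (by omega) (by omega))
        (hd.2.2.2.1.trans hd.2.2.2.2.1) (fun M N f hM hN => (hcok M N f hM hN).2),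
        ← hd.2.2.2.2.2]
    · -- For `k = m`, the sequence has reached `C(-m) = A`, and `[0, A]` has heart `A`.
      rw [hν2 _ le_rfl, hlo, hhi]
      ext X
      refine ⟨fun _ => ⟨trivial, fun Z hZ f => IsZero.eq_of_tgt hZ _ _⟩,
        fun _ => ⟨trivial, fun _ _ _ => trivial⟩⟩
  -- Reverse induction on `k`, with `n = m + 1 - k`.
  have key : ∀ n k, k + n = m + 1 → 1 ≤ k → lo k = F k := by
    intro n
    induction n with
    | zero =>
      rintro k hk -
      obtain rfl : k = m + 1 := by omega
      rw [hlo, hF1]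
    | succ n ih =>
      intro k hk h1
      have hd := hdec k h1 (by omega)
      rw [hF2 k h1 (by omega), ← ih (k + 1) (by omega) (by omega), hC k h1 (by omega),
        hW k h1 (by omega)]
      exact starProd_eq hlen (hloT _ (by omega) (by omega)) hd.1 (hhiT _ (by omega) (by omega))
        hd.2.2.1 (hd.2.2.2.1.trans hd.2.2.2.2.1)
  intro k h1 h2
  exact key (m + 1 - k) k (by omega) h1
end
end
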